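/- For every integer n ≥ 1 and real q > 1, there exists a surjective unital *-homomorphism φ : A_n(q) → A_{n−1}(q) whose kernel is isomorphic, as a (non-unital) C*-algebra via a *-algebra isomorphism, to C(𝕋, K(H_n)), the C*-algebra of continuous functions from the circle into the compact operators on H_n (which is C(𝕋) ⊗ K(ℓ²(ℕⁿ))). Equivalently, there is a short exact sequence of C*-algebras 0 → C(𝕋) ⊗ K(ℓ²(ℤ_{≥0}ⁿ)) → C(S_q^{2n+1}) → C(S_q^{2n−1}) → 0. -/

import Mathlib

set_option synthInstance.maxHeartbeats 1000000
set_option maxHeartbeats 4000000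

noncomputable section

/-- The Hilbert space `ℓ²(ℤ) ⊗ H_n = ℓ²(ℤ × ℕⁿ)`, where `H_n = ℓ²(ℕⁿ)`. -/
abbrev HZ (n : ℕ) : Type := lp (fun _ : ℤ × (Fin n → ℕ) => ℂ) 2

/-- The standard orthonormal basis vectors `e_m ⊗ e_k` of `ℓ²(ℤ × ℕⁿ)`. -/
def ez {n : ℕ} (m : ℤ) (k : Fin n → ℕ) : HZ n := lp.single 2 (m, k) 1

/-- For an index `j` with `1 ≤ j+1 ≤ n` (so `w_{j+2} = γ^{⊗(n-1-j)} ⊗ α* ⊗ 1^{⊗j}`),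
the (0-based) coordinate `n - 1 - j` at which the shift `α*` acts. -/
def shiftIdx {n : ℕ} (j : Fin n) : Fin n := ⟨n - 1 - (j : ℕ), by have := j.isLt; omega⟩

/-- `IsVFamily q v` says that `v 0, …, v n` are the operators `v_i = S ⊗ w_i`
(`1 ≤ i ≤ n+1`) on `ℓ²(ℤ) ⊗ ℓ²(ℕⁿ)`, where `S` is the bilateral shift and
`w_1 e_k = q^{-(k_1+⋯+k_n)} e_k`,
`w_i e_k = q^{-(k_1+⋯+k_{n+1-i})} (1-q^{-2(k_{n+2-i}+1)})^{1/2} e_{k+δ_{n+2-i}}` for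
`2 ≤ i ≤ n+1`.  The `v_i` are the images of the generators `u_{n+1,i}` of
`C(S_q^{2n+1})` under the faithful representation `(τ'_{n+1} ⊗ π_{n(n-1)⋯21})Δⁿ`. -/
def IsVFamily (q : ℝ) {n : ℕ} (v : Fin (n + 1) → (HZ n →L[ℂ] HZ n)) : Prop :=
  (∀ (m : ℤ) (k : Fin n → ℕ),
    v 0 (ez m k) = (q ^ (-(∑ s, (k s : ℤ)))) • ez (m + 1) k) ∧
  (∀ (j : Fin n) (m : ℤ) (k : Fin n → ℕ),
    v j.succ (ez m k) =
      ((q ^ (-(∑ s ∈ Finset.univ.filter (fun s : Fin n => (s : ℕ) < n - 1 - (j : ℕ)), (k s : ℤ)))) *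
          Real.sqrt (1 - q ^ (-2 * ((k (shiftIdx j) : ℤ) + 1)))) •
        ez (m + 1) (Function.update k (shiftIdx j) (k (shiftIdx j) + 1)))

/-- `A_n(q)`: the unital C*-subalgebra of bounded operators on `ℓ²(ℤ) ⊗ ℓ²(ℕⁿ)` generated
by `v_1, …, v_{n+1}`; the concrete realization of the quantum sphere algebra
`C(S_q^{2n+1})`. -/
def sphereAlg {n : ℕ} (v : Fin (n + 1) → (HZ n →L[ℂ] HZ n)) :
    StarSubalgebra ℂ (HZ n →L[ℂ] HZ n) :=
  (StarAlgebra.adjoin ℂ (Set.range v)).topologicalClosure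

/-- The Hilbert space `H_n = ℓ²(ℕⁿ)`. -/
abbrev Hn (n : ℕ) : Type := lp (fun _ : (Fin n → ℕ) => ℂ) 2
noncomputable section

/-- The compact operators on a complex Hilbert space `X`, as a non-unital star subalgebra
of the bounded operators (a C*-algebra).  By Schauder's theorem the condition that the
adjoint `star T` is also compact is automatic, so the carrier is exactly the set of
compact operators. -/
def compactOps (X : Type*) [NormedAddCommGroup X] [InnerProductSpace ℂ X]
    [CompleteSpace X] : NonUnitalStarSubalgebra ℂ (X →L[ℂ] X) where
  carrier := {T | IsCompactOperator ⇑T ∧ IsCompactOperator ⇑(star T)}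
  zero_mem' := by
    constructor <;> simpa using (isCompactOperator_zero (M₁ := X) (M₂ := X))
  add_mem' := by
    rintro a b ⟨ha1, ha2⟩ ⟨hb1, hb2⟩
    refine ⟨?_, ?_⟩
    · simpa [ContinuousLinearMap.coe_add] using ha1.add hb1
    · rw [star_add]; simpa [ContinuousLinearMap.coe_add] using ha2.add hb2
  mul_mem' := by
    rintro a b ⟨ha1, ha2⟩ ⟨hb1, hb2⟩
    refine ⟨?_, ?_⟩
    · simpa [ContinuousLinearMap.mul_def, ContinuousLinearMap.coe_comp] using ha1.comp_clm b
    · rw [star_mul]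
      simpa [ContinuousLinearMap.mul_def, ContinuousLinearMap.coe_comp] using
        hb2.comp_clm (star a)
  smul_mem' := by
    rintro c a ⟨ha1, ha2⟩
    refine ⟨?_, ?_⟩
    · simpa [ContinuousLinearMap.coe_smul] using ha1.smul c
    · rw [star_smul]; simpa [ContinuousLinearMap.coe_smul] using ha2.smul (star c)
  star_mem' := by
    rintro a ⟨ha1, ha2⟩
    exact ⟨ha2, by simpa [star_star] using ha1⟩
/-- The C*-algebra `C(𝕋, K(X)) = C(𝕋) ⊗ K(X)` of continuous functions from the circle
into the compact operators on a complex Hilbert space `X`, as a non-unital star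
subalgebra of `C(𝕋, B(X))`. -/
def compactValued (X : Type*) [NormedAddCommGroup X] [InnerProductSpace ℂ X]
    [CompleteSpace X] : NonUnitalStarSubalgebra ℂ C(Circle, X →L[ℂ] X) where
  carrier := {f | ∀ z, f z ∈ compactOps X}
  zero_mem' := by intro z; simpa using zero_mem (compactOps X)
  add_mem' := by
    intro f g hf hg z
    simpa using add_mem (hf z) (hg z)
  mul_mem' := by
    intro f g hf hg z
    simpa using mul_mem (hf z) (hg z)
  smul_mem' := by
    intro c f hf z
    simpa using SMulMemClass.smul_mem c (hf z)
  star_mem' := by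
    intro f hf z
    simpa using star_mem (hf z)

/-- The kernel of a unital *-homomorphism, as a non-unital star subalgebra (a closed
two-sided star-ideal) of the domain. -/
def starAlgHomKer {A B : Type*} [Semiring A] [Algebra ℂ A] [StarRing A]
    [Semiring B] [Algebra ℂ B] [StarRing B] (φ : A →⋆ₐ[ℂ] B) :
    NonUnitalStarSubalgebra ℂ A where
  carrier := {x | φ x = 0}
  zero_mem' := by simp
  add_mem' := by
    intro a b ha hb
    simp only [Set.mem_setOf_eq] at *
    simp [map_add, ha, hb]
  mul_mem' := by
    intro a b ha hb
    simp only [Set.mem_setOf_eq] at *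
    simp [map_mul, ha, hb]
  smul_mem' := by
    intro c a ha
    simp only [Set.mem_setOf_eq] at *
    simp [map_smul, ha]
  star_mem' := by
    intro a ha
    simp only [Set.mem_setOf_eq] at *
    simp [map_star, ha]

section ShortcutInstances

variable (X : Type*) [NormedAddCommGroup X] [InnerProductSpace ℂ X] [CompleteSpace X]

-- Shortcut instances (all definitionally the canonical ones) to speed up elaboration.
instance : SMul ℂ ↥(compactValued X) := inferInstance
instance : Add ↥(compactValued X) := inferInstance
instance : Mul ↥(compactValued X) := inferInstance
instance : Star ↥(compactValued X) := inferInstance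

variable {A B : Type*} [Semiring A] [Algebra ℂ A] [StarRing A]
    [Semiring B] [Algebra ℂ B] [StarRing B] (φ : A →⋆ₐ[ℂ] B)

instance : SMul ℂ ↥(starAlgHomKer φ) := inferInstance
instance : Add ↥(starAlgHomKer φ) := inferInstance
instance : Mul ↥(starAlgHomKer φ) := inferInstance
instance : Star ↥(starAlgHomKer φ) := inferInstance

end ShortcutInstances

/-!
Let `W` embed `ℓ²(ℤ × ℕⁿ⁺¹)` into `ℓ²(ℤ × ℕⁿ × ℤ)` by extending vectors by zero to negative last
coordinates. The larger space carries a multiple `ρ` of the identity representation of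
`B(ℓ²(ℤ × ℕⁿ))`, arranged so that the last coordinate records degree minus height. Modulo
`I = C(𝕋) ⊗ K`, the generators satisfy `W v_{i+1} = ρ(v'_i) W` and `v_0 = 0`, so every pair `(x, y)`
in the C*-algebra `Γ` generated by `(v_0, 0)` and the `(v_{i+1}, v'_i)` satisfies
`W x - ρ(y) W ∈ I`. If `x = 0`, the columns of `ρ(y) W` far out in the last coordinate are
translates of those of `y` and tend to `0`, so `y = 0`. If `y = 0`, then `x = W* W x ∈ I`.
Conversely `I × 0 ⊆ Γ`: the powers of `v_0* v_0` converge to the projection onto `ℓ²(ℤ) ⊗ e_0`,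
which the `v_i` move to all matrix units. Hence `Γ` is the graph of a surjection with kernel `I`.
Finally `I` acting on `ℓ²(ℤ × ℕⁿ⁺¹)` is isomorphic to `C(𝕋, K)`, because both are closed spans of
systems `z^a ⊗ e_{kl}` whose elements are determined by Fourier coefficients of matrix entries.
-/

open Filter Topology Function ContinuousLinearMap
open scoped InnerProductSpace ComplexConjugate CStarAlgebra

local notation "ℓ²(" ι ")" => lp (fun _ : ι => ℂ) 2

/-! ### Weighted shifts -/

section SequenceSpaces

variable {ι κ : Type*} [DecidableEq ι] [DecidableEq κ]
  {E : Type*} [NormedAddCommGroup E] [InnerProductSpace ℂ E] [CompleteSpace E]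

/-- The standard orthonormal basis vector `e_i` of `ℓ²(ι)`. -/
def stdBasis (i : ι) : ℓ²(ι) := lp.single 2 i 1

theorem stdBasis_apply (i j : ι) : stdBasis i j = if j = i then (1 : ℂ) else 0 := by
  simp [stdBasis, Pi.single_apply]

theorem inner_stdBasis_left (i : ι) (x : ℓ²(ι)) : ⟪stdBasis i, x⟫_ℂ = x i := by
  simp [stdBasis, lp.inner_single_left]

theorem orthonormal_stdBasis : Orthonormal ℂ (stdBasis : ι → ℓ²(ι)) := by
  simp [orthonormal_iff_ite, inner_stdBasis_left, stdBasis_apply]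

theorem hasSum_smul_stdBasis (x : ℓ²(ι)) : HasSum (fun i => x i • stdBasis i) x := by
  simpa [stdBasis, ← lp.single_smul] using lp.hasSum_single (p := 2) (by simp) x

theorem ext_stdBasis {F : Type*} [NormedAddCommGroup F] [NormedSpace ℂ F]
    {S T : ℓ²(ι) →L[ℂ] F} (h : ∀ i, S (stdBasis i) = T (stdBasis i)) : S = T := by
  ext x
  refine ((hasSum_smul_stdBasis x).mapL S).unique ?_
  simpa only [map_smul, h] using (hasSum_smul_stdBasis x).mapL T

theorem adjoint_apply_coord (T : ℓ²(ι) →L[ℂ] E) (y : E) (i : ι) :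
    (adjoint T y) i = ⟪T (stdBasis i), y⟫_ℂ := by
  rw [← inner_stdBasis_left, adjoint_inner_right]

/-- The isometry `ℓ²(ι) → ℓ²(κ)` sending `e_i` to `e_{f i}`, for an injective map `f`. -/
def reindexIsometry {f : ι → κ} (hf : Injective f) : ℓ²(ι) →ₗᵢ[ℂ] ℓ²(κ) :=
  (orthonormal_stdBasis.comp f hf).orthogonalFamily.linearIsometry

theorem reindexIsometry_stdBasis {f : ι → κ} (hf : Injective f) (i : ι) :
    reindexIsometry hf (stdBasis i) = stdBasis (f i) := by
  simp [reindexIsometry, stdBasis, OrthogonalFamily.linearIsometry_apply_single]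

theorem adjoint_reindexIsometry_apply {ι : Type*} {f : ι → κ} (hf : Injective f) (y : ℓ²(κ))
    (i : ι) :
    (adjoint (reindexIsometry hf).toContinuousLinearMap y) i = y (f i) := by
  classical
  rw [adjoint_apply_coord, LinearIsometry.coe_toContinuousLinearMap, reindexIsometry_stdBasis,
    inner_stdBasis_left]

theorem norm_sq_sum_smul_stdBasis (c : ι → ℂ) (s : Finset ι) :
    ‖∑ i ∈ s, c i • (stdBasis i : ℓ²(ι))‖ ^ 2 = ∑ i ∈ s, ‖c i‖ ^ 2 := by
  simpa using orthonormal_stdBasis.orthogonalFamily.norm_sum c s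

theorem norm_le_of_apply_stdBasis {T : ℓ²(ι) →L[ℂ] ℓ²(κ)} {d : ι → ℂ} {f : ι → κ}
    (hT : ∀ i, T (stdBasis i) = d i • stdBasis (f i)) (hf : Injective f) {ε : ℝ} (hε : 0 ≤ ε)
    (hd : ∀ i, ‖d i‖ ≤ ε) : ‖T‖ ≤ ε := by
  refine opNorm_le_bound _ hε fun x => ?_
  have hTx := ((hasSum_smul_stdBasis x).mapL T).norm
  refine le_of_tendsto_of_tendsto' hTx ((hasSum_smul_stdBasis x).norm.const_mul ε) fun s => ?_
  have norm_image : ‖∑ i ∈ s, T (x i • stdBasis i)‖ ^ 2 = ∑ i ∈ s, ‖x i * d i‖ ^ 2 := by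
    simpa [hT, smul_smul] using
      (orthonormal_stdBasis.comp f hf).orthogonalFamily.norm_sum (fun i => x i * d i) s
  refine le_of_sq_le_sq ?_ (by positivity)
  rw [norm_image, mul_pow, norm_sq_sum_smul_stdBasis, Finset.mul_sum]
  refine Finset.sum_le_sum fun i _ => ?_
  rw [norm_mul, mul_pow, mul_comm]
  gcongr
  exact hd i

end SequenceSpaces

section WeightedShifts

variable {K L M : Type*} [DecidableEq K] [DecidableEq L] [DecidableEq M]

/-- `T : ℓ²(ℤ × K) → ℓ²(ℤ × L)` is the weighted shift of degree `a` with weights `d` along `τ`: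
it maps `e_{m,k}` to `d k • e_{m+a,τ k}`. -/
def IsWeightedShift (T : ℓ²(ℤ × K) →L[ℂ] ℓ²(ℤ × L)) (a : ℤ) (d : K → ℂ) (τ : K → L) :
    Prop :=
  ∀ m k, T (stdBasis (m, k)) = d k • stdBasis (m + a, τ k)

namespace IsWeightedShift

variable {S T : ℓ²(ℤ × K) →L[ℂ] ℓ²(ℤ × L)} {a b : ℤ} {d d' : K → ℂ} {τ τ' : K → L}

theorem ext (hS : IsWeightedShift S a d τ) (hT : IsWeightedShift T a d' τ') (hd : ∀ k, d k = d' k)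
    (hτ : ∀ k, d k ≠ 0 → τ k = τ' k) : S = T := by
  refine ext_stdBasis fun ⟨m, k⟩ => ?_
  rw [hS, hT, ← hd]
  by_cases h : d k = 0
  · simp [h]
  · rw [hτ k h]

theorem congr_map (hT : IsWeightedShift T a d τ) (h : ∀ k, d k ≠ 0 → τ k = τ' k) :
    IsWeightedShift T a d τ' := by
  intro m k
  rw [hT]
  by_cases hd : d k = 0
  · simp [hd]
  · rw [h k hd]

theorem comp {R : ℓ²(ℤ × L) →L[ℂ] ℓ²(ℤ × M)} {d₂ : L → ℂ} {τ₂ : L → M}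
    (hR : IsWeightedShift R b d₂ τ₂) (hT : IsWeightedShift T a d τ) :
    IsWeightedShift (R ∘L T) (b + a) (fun k => d k * d₂ (τ k)) (fun k => τ₂ (τ k)) := by
  intro m k
  rw [ContinuousLinearMap.comp_apply, hT, map_smul, hR, smul_smul, add_assoc, add_comm a b]

theorem smul (hT : IsWeightedShift T a d τ) (c : ℂ) :
    IsWeightedShift (c • T) a (fun k => c * d k) τ := by
  intro m k
  rw [smul_apply, hT, smul_smul]

theorem sub (hS : IsWeightedShift S a d τ) (hT : IsWeightedShift T a d' τ) :
    IsWeightedShift (S - T) a (fun k => d k - d' k) τ := by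
  intro m k
  rw [sub_apply, hS, hT, sub_smul]

theorem adjoint (hT : IsWeightedShift T a d τ) {d' : L → ℂ} {τ' : L → K}
    (h : ∀ k l, (if l = τ k then conj (d k) else 0) = if k = τ' l then d' l else 0) :
    IsWeightedShift (adjoint T) (-a) d' τ' := by
  intro m l
  ext ⟨m', k⟩
  have hkl := h k l
  rw [adjoint_apply_coord, hT, inner_smul_left, inner_stdBasis_left, stdBasis_apply,
    lp.coeFn_smul, Pi.smul_apply, stdBasis_apply]
  simp only [Prod.mk.injEq, smul_eq_mul, eq_comm (a := τ k), eq_comm (a := m' + a)]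
  by_cases hm : m' = m + -a
  · simpa [hm] using hkl
  · have hm' : ¬ m = m' + a := by lia
    simp [hm, hm']

theorem norm_le (hT : IsWeightedShift T a d τ) (hτ : Injective τ) {ε : ℝ} (hε : 0 ≤ ε)
    (hd : ∀ k, ‖d k‖ ≤ ε) : ‖T‖ ≤ ε := by
  refine norm_le_of_apply_stdBasis (d := fun i => d i.2) (f := fun i => (i.1 + a, τ i.2))
    (fun i => hT i.1 i.2) ?_ hε fun i => hd i.2
  rintro ⟨m, k⟩ ⟨m', k'⟩ h
  obtain ⟨h₁, h₂⟩ := Prod.mk.inj h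
  exact Prod.ext (add_right_cancel h₁) (hτ h₂)

end IsWeightedShift

theorem IsWeightedShift.pow {T : ℓ²(ℤ × K) →L[ℂ] ℓ²(ℤ × K)} {d : K → ℂ}
    (hT : IsWeightedShift T 0 d id) (M : ℕ) : IsWeightedShift (T ^ M) 0 (fun k => d k ^ M) id := by
  induction M with
  | zero => intro m k; simp
  | succ M ih =>
    intro m k
    rw [pow_succ, mul_apply_eq_comp, hT, map_smul, ih, smul_smul]
    simp [pow_succ']

theorem injective_shift {κ : Type*} (a : ℤ) (k : κ) : Injective fun m : ℤ => (m + a, k) :=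
  fun _ _ h => by simpa using h

/-- The operator `S^a ⊗ e_{lk} : ℓ²(ℤ × K) → ℓ²(ℤ × L)`. -/
def shiftUnit (a : ℤ) (l : L) (k : K) : ℓ²(ℤ × K) →L[ℂ] ℓ²(ℤ × L) :=
  (reindexIsometry (injective_shift a l)).toContinuousLinearMap ∘L
    adjoint (reindexIsometry (injective_shift 0 k)).toContinuousLinearMap

theorem isWeightedShift_shiftUnit (a : ℤ) (l : L) (k : K) :
    IsWeightedShift (shiftUnit a l k) a (fun k' => if k' = k then 1 else 0) fun _ => l := by
  intro m k'
  have restrict : adjoint (reindexIsometry (injective_shift 0 k)).toContinuousLinearMap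
      (stdBasis (m, k')) = (if k' = k then (1 : ℂ) else 0) • stdBasis m := by
    ext i
    rw [adjoint_reindexIsometry_apply, lp.coeFn_smul, Pi.smul_apply, stdBasis_apply,
      stdBasis_apply]
    by_cases h : k' = k <;> simp [h, Ne.symm]
  rw [shiftUnit, ContinuousLinearMap.comp_apply, restrict, map_smul,
    LinearIsometry.coe_toContinuousLinearMap, reindexIsometry_stdBasis]

theorem adjoint_shiftUnit (a : ℤ) (l : L) (k : K) :
    adjoint (shiftUnit a l k) = shiftUnit (-a) k l :=
  ((isWeightedShift_shiftUnit a l k).adjoint (d' := fun l' => if l' = l then 1 else 0)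
    (τ' := fun _ => k) fun k' l' => by
      by_cases hk : k' = k <;> by_cases hl : l' = l <;> simp [hk, hl]).ext
    (isWeightedShift_shiftUnit (-a) k l) (fun _ => rfl) fun _ _ => rfl

theorem IsWeightedShift.comp_shiftUnit {T : ℓ²(ℤ × L) →L[ℂ] ℓ²(ℤ × M)} {a : ℤ} {d : L → ℂ}
    {τ : L → M} (hT : IsWeightedShift T a d τ) (b : ℤ) (l : L) (k : K) :
    T ∘L shiftUnit b l k = d l • shiftUnit (a + b) (τ l) k :=
  (hT.comp (isWeightedShift_shiftUnit b l k)).ext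
    ((isWeightedShift_shiftUnit (a + b) (τ l) k).smul _) (fun _ => mul_comm _ _) fun _ _ => rfl

theorem shiftUnit_comp_shiftUnit (a b : ℤ) (l' : M) (k' l : L) (k : K) :
    shiftUnit a l' k' ∘L shiftUnit b l k = if l = k' then shiftUnit (a + b) l' k else 0 := by
  rw [(isWeightedShift_shiftUnit a l' k').comp_shiftUnit]
  split_ifs <;> simp

variable (K L) in
/-- The closed linear span of the operators `S^a ⊗ e_{lk}`, that is, `C(𝕋) ⊗ K(ℓ²(K), ℓ²(L))`
acting from `ℓ²(ℤ × K)` to `ℓ²(ℤ × L)` with `C(𝕋)` acting on `ℓ²(ℤ)` by convolution. -/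
def circleCompacts : Submodule ℂ (ℓ²(ℤ × K) →L[ℂ] ℓ²(ℤ × L)) :=
  (Submodule.span ℂ (Set.range fun p : ℤ × L × K => shiftUnit p.1 p.2.1 p.2.2)).topologicalClosure

theorem isClosed_circleCompacts :
    IsClosed (circleCompacts K L : Set (ℓ²(ℤ × K) →L[ℂ] ℓ²(ℤ × L))) :=
  Submodule.isClosed_topologicalClosure _

theorem shiftUnit_mem_circleCompacts (a : ℤ) (l : L) (k : K) :
    shiftUnit a l k ∈ circleCompacts K L :=
  Submodule.le_topologicalClosure _ (Submodule.subset_span ⟨(a, l, k), rfl⟩)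

theorem circleCompacts_le {S : Submodule ℂ (ℓ²(ℤ × K) →L[ℂ] ℓ²(ℤ × L))}
    (hS : IsClosed (S : Set (ℓ²(ℤ × K) →L[ℂ] ℓ²(ℤ × L))))
    (h : ∀ a l k, shiftUnit a l k ∈ S) : circleCompacts K L ≤ S := by
  refine Submodule.topologicalClosure_minimal _ (Submodule.span_le.2 ?_) hS
  rintro _ ⟨p, rfl⟩
  exact h _ _ _

theorem adjoint_mem_circleCompacts {X : ℓ²(ℤ × K) →L[ℂ] ℓ²(ℤ × L)}
    (hX : X ∈ circleCompacts K L) : adjoint X ∈ circleCompacts L K := by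
  refine circleCompacts_le
    (S := (circleCompacts L K).comap (adjoint : _ ≃ₗᵢ⋆[ℂ] _).toLinearEquiv.toLinearMap)
    (isClosed_circleCompacts.preimage (adjoint : _ ≃ₗᵢ⋆[ℂ] _).continuous) (fun a l k => ?_) hX
  simpa [adjoint_shiftUnit] using shiftUnit_mem_circleCompacts (-a) k l

namespace IsWeightedShift

variable {a b : ℤ}

theorem comp_mem_circleCompacts {T : ℓ²(ℤ × L) →L[ℂ] ℓ²(ℤ × M)} {d : L → ℂ} {τ : L → M}
    (hT : IsWeightedShift T a d τ) {X : ℓ²(ℤ × K) →L[ℂ] ℓ²(ℤ × L)}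
    (hX : X ∈ circleCompacts K L) : T ∘L X ∈ circleCompacts K M := by
  refine circleCompacts_le (S := (circleCompacts K M).comap (compL ℂ _ _ _ T).toLinearMap)
    (isClosed_circleCompacts.preimage (compL ℂ _ _ _ T).continuous) (fun b l k => ?_) hX
  change T ∘L shiftUnit b l k ∈ circleCompacts K M
  rw [hT.comp_shiftUnit]
  exact Submodule.smul_mem _ _ (shiftUnit_mem_circleCompacts _ _ _)

theorem circleCompacts_comp_mem {T : ℓ²(ℤ × K) →L[ℂ] ℓ²(ℤ × L)} {d : L → ℂ} {τ : L → K}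
    (hT : IsWeightedShift (ContinuousLinearMap.adjoint T) a d τ)
    {X : ℓ²(ℤ × L) →L[ℂ] ℓ²(ℤ × M)}
    (hX : X ∈ circleCompacts L M) : X ∘L T ∈ circleCompacts K M := by
  simpa [adjoint_comp] using
    adjoint_mem_circleCompacts (hT.comp_mem_circleCompacts (adjoint_mem_circleCompacts hX))

theorem mem_circleCompacts {T : ℓ²(ℤ × K) →L[ℂ] ℓ²(ℤ × L)} {d : K → ℂ} {τ : K → L}
    (hT : IsWeightedShift T a d τ) (hτ : Injective τ) (hd : Tendsto d cofinite (𝓝 0)) :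
    T ∈ circleCompacts K L := by
  refine isClosed_circleCompacts.closure_subset (Metric.mem_closure_iff.2 fun ε hε => ?_)
  have hfin : {k | ε / 2 ≤ ‖d k‖}.Finite := by
    simpa using (Metric.tendsto_nhds.1 hd (ε / 2) (half_pos hε))
  set F := hfin.toFinset with hF
  refine ⟨∑ k ∈ F, d k • shiftUnit a (τ k) k, Submodule.sum_mem _ fun k _ =>
    Submodule.smul_mem _ _ (shiftUnit_mem_circleCompacts _ _ _), ?_⟩
  have tail : IsWeightedShift (T - ∑ k ∈ F, d k • shiftUnit a (τ k) k) a
      (fun k => if k ∈ F then 0 else d k) τ := by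
    intro m k
    simp only [sub_apply, hT m k, sum_apply, smul_apply, isWeightedShift_shiftUnit _ _ _ m k,
      ite_smul, one_smul, zero_smul, smul_ite, smul_zero, Finset.sum_ite_eq]
    split_ifs <;> simp
  rw [dist_eq_norm]
  refine (tail.norm_le hτ (half_pos hε).le fun k => ?_).trans_lt (half_lt_self hε)
  split_ifs with hk
  · simpa using (half_pos hε).le
  · simpa [hF] using (not_le.1 (by simpa [hF] using hk)).le

end IsWeightedShift

theorem tendsto_apply_stdBasis_of_mem_circleCompacts {X : ℓ²(ℤ × K) →L[ℂ] ℓ²(ℤ × L)}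
    (hX : X ∈ circleCompacts K L) (m : ℤ) :
    Tendsto (fun k => X (stdBasis (m, k))) cofinite (𝓝 0) := by
  let S : Submodule ℂ (ℓ²(ℤ × K) →L[ℂ] ℓ²(ℤ × L)) :=
    { carrier := {X | Tendsto (fun k => X (stdBasis (m, k))) cofinite (𝓝 0)}
      add_mem' hX hY := by simpa using Tendsto.add hX hY
      zero_mem' := by simpa using tendsto_const_nhds
      smul_mem' c X hX := by simpa using Tendsto.const_smul hX c }
  refine circleCompacts_le (S := S) (isClosed_of_closure_subset fun X hX => ?_) (fun a l k => ?_) hX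
  · refine Metric.tendsto_nhds.2 fun ε hε => ?_
    obtain ⟨Y, hY, hXY⟩ := Metric.mem_closure_iff.1 hX _ (half_pos hε)
    filter_upwards [Metric.tendsto_nhds.1 hY _ (half_pos hε)] with k hk
    calc dist (X (stdBasis (m, k))) 0
        ≤ dist (X (stdBasis (m, k))) (Y (stdBasis (m, k))) + dist (Y (stdBasis (m, k))) 0 :=
          dist_triangle _ _ _
      _ < ε / 2 + ε / 2 := add_lt_add_of_le_of_lt ?_ hk
      _ = ε := add_halves ε
    rw [dist_eq_norm, ← sub_apply]
    refine ((X - Y).unit_le_opNorm _ (orthonormal_stdBasis.1 _).le).trans ?_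
    rw [← dist_eq_norm]
    exact hXY.le
  · refine tendsto_const_nhds.congr' ?_
    filter_upwards [eventually_cofinite_ne k] with k' hk'
    rw [isWeightedShift_shiftUnit]
    simp [hk']

end WeightedShifts

/-! ### Extensions and closed spans of matrix units -/

section InjectiveImages

variable {A B : Type*} [CStarAlgebra A] [CStarAlgebra B]

theorem isClosed_image_of_injOn {S : Type*} [SetLike S A] [NonUnitalSubringClass S A]
    [SMulMemClass S ℂ A] [StarMemClass S A] {G : S} (hG : IsClosed (G : Set A))
    {p : A →⋆ₙₐ[ℂ] B} (hp : Set.InjOn p G) : IsClosed (p '' G) := by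
  have := hG
  have : CompleteSpace G := hG.completeSpace_coe
  have isometry := NonUnitalStarAlgHom.isometry (p.comp (NonUnitalStarSubalgebraClass.subtype G))
    hp.injective
  convert isometry.isClosedEmbedding.isClosed_range
  rw [Set.image_eq_range]
  rfl

theorem map_topologicalClosure_adjoin_of_injOn {s : Set A} {p : A →⋆ₐ[ℂ] B}
    (hp : Set.InjOn p (StarAlgebra.adjoin ℂ s).topologicalClosure) :
    (StarAlgebra.adjoin ℂ s).topologicalClosure.map p =
      (StarAlgebra.adjoin ℂ (p '' s)).topologicalClosure := by
  rw [← StarAlgHom.map_adjoin]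
  refine le_antisymm (StarSubalgebra.map_topologicalClosure_le _ p (map_continuous p)) ?_
  refine StarSubalgebra.topologicalClosure_minimal
    (StarSubalgebra.map_mono (StarSubalgebra.le_topologicalClosure _)) ?_
  exact isClosed_image_of_injOn (p := (p : A →⋆ₙₐ[ℂ] B))
    (StarSubalgebra.isClosed_topologicalClosure _) hp

end InjectiveImages

section Extensions

variable {A B : Type*} [CStarAlgebra A] [CStarAlgebra B]

theorem exists_starAlgHom_of_graph (Γ : StarSubalgebra ℂ (A × B))
    (hΓ : ∀ y, ((0 : A), y) ∈ Γ → y = 0) :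
    ∃ φ : Γ.map (StarAlgHom.fst ℂ A B) →⋆ₐ[ℂ] Γ.map (StarAlgHom.snd ℂ A B),
      Function.Surjective φ ∧ ∀ x, φ x = 0 ↔ ((x : A), (0 : B)) ∈ Γ := by
  let P : Γ →⋆ₐ[ℂ] Γ.map (StarAlgHom.fst ℂ A B) :=
    ((StarAlgHom.fst ℂ A B).comp Γ.subtype).codRestrict _ fun p =>
      StarSubalgebra.mem_map.2 ⟨p, p.2, rfl⟩
  let Q : Γ →⋆ₐ[ℂ] Γ.map (StarAlgHom.snd ℂ A B) :=
    ((StarAlgHom.snd ℂ A B).comp Γ.subtype).codRestrict _ fun p =>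
      StarSubalgebra.mem_map.2 ⟨p, p.2, rfl⟩
  have injective_P : Function.Injective P := by
    rw [injective_iff_map_eq_zero]
    rintro ⟨⟨x, y⟩, hxy⟩ h
    obtain rfl : x = 0 := congrArg Subtype.val h
    exact Subtype.ext (Prod.ext rfl (hΓ y hxy))
  have surjective_P : Function.Surjective P := by
    rintro ⟨_, p, hp, rfl⟩
    exact ⟨⟨p, hp⟩, rfl⟩
  let e := StarAlgEquiv.ofBijective P ⟨injective_P, surjective_P⟩
  refine ⟨Q.comp (e.symm : _ →⋆ₐ[ℂ] Γ), ?_, fun x => ?_⟩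
  · rintro ⟨_, p, hp, rfl⟩
    exact ⟨e ⟨p, hp⟩, congrArg Q (e.symm_apply_apply _)⟩
  · obtain ⟨⟨⟨x, y⟩, hxy⟩, rfl⟩ := e.surjective x
    change Q (e.symm (e _)) = 0 ↔ (x, (0 : B)) ∈ Γ
    rw [StarAlgEquiv.symm_apply_apply]
    refine ⟨fun h => ?_, fun h => Subtype.ext (hΓ y ?_)⟩
    · obtain rfl : y = 0 := congrArg Subtype.val h
      exact hxy
    · simpa using sub_mem hxy h

theorem nonempty_starAlgHomKer_equiv {S : StarSubalgebra ℂ A} {T : StarSubalgebra ℂ B}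
    (φ : S →⋆ₐ[ℂ] T) {N : NonUnitalStarSubalgebra ℂ A} (hN : ∀ x ∈ N, x ∈ S)
    (hφ : ∀ x, φ x = 0 ↔ (x : A) ∈ N) : Nonempty (starAlgHomKer φ ≃⋆ₐ[ℂ] N) :=
  ⟨{ toFun x := ⟨x.1.1, (hφ _).1 x.2⟩
     invFun x := ⟨⟨x.1, hN _ x.2⟩, (hφ _).2 x.2⟩
     left_inv _ := rfl
     right_inv _ := rfl
     map_mul' _ _ := rfl
     map_add' _ _ := rfl
     map_star' _ := rfl
     map_smul' _ _ := rfl }⟩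

theorem map_fst_topologicalClosure_adjoin {S : Set (A × B)}
    (hfst : ∀ y, ((0 : A), y) ∈ (StarAlgebra.adjoin ℂ S).topologicalClosure → y = 0) :
    (StarAlgebra.adjoin ℂ S).topologicalClosure.map (StarAlgHom.fst ℂ A B) =
      (StarAlgebra.adjoin ℂ (Prod.fst '' S)).topologicalClosure := by
  refine map_topologicalClosure_adjoin_of_injOn ?_
  rintro ⟨x, y⟩ hxy ⟨_, y'⟩ hxy' rfl
  exact Prod.ext rfl (sub_eq_zero.1 (hfst _ (by simpa using sub_mem hxy hxy')))

theorem isClosed_map_snd {Γ : StarSubalgebra ℂ (A × B)} (hΓ : IsClosed (Γ : Set (A × B)))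
    {s : B → A} (hs : Continuous s) (hsub : ∀ p ∈ Γ, (p.1 - s p.2, (0 : B)) ∈ Γ) :
    IsClosed (Γ.map (StarAlgHom.snd ℂ A B) : Set B) := by
  -- `y ↦ (s y, y)` is a continuous section of the second projection `Γ → B`.
  have mem_map_snd (y : B) : y ∈ Γ.map (StarAlgHom.snd ℂ A B) ↔ (s y, y) ∈ Γ := by
    refine ⟨?_, fun h => ⟨_, h, rfl⟩⟩
    rintro ⟨⟨x, y⟩, hxy, rfl⟩
    have : ((x, y) : A × B) - (x - s y, 0) ∈ Γ := sub_mem hxy (hsub _ hxy)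
    simpa using this
  convert hΓ.preimage (hs.prodMk continuous_id) using 1
  exact Set.ext mem_map_snd

theorem map_snd_topologicalClosure_adjoin {S : Set (A × B)} {s : B → A} (hs : Continuous s)
    (hsub : ∀ p ∈ (StarAlgebra.adjoin ℂ S).topologicalClosure,
      (p.1 - s p.2, (0 : B)) ∈ (StarAlgebra.adjoin ℂ S).topologicalClosure) :
    (StarAlgebra.adjoin ℂ S).topologicalClosure.map (StarAlgHom.snd ℂ A B) =
      (StarAlgebra.adjoin ℂ (Prod.snd '' S)).topologicalClosure := by
  refine le_antisymm ?_ (StarSubalgebra.topologicalClosure_minimal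
    (StarAlgebra.adjoin_le_iff.2 ?_)
    (isClosed_map_snd (StarSubalgebra.isClosed_topologicalClosure _) hs hsub))
  · refine (StarSubalgebra.map_topologicalClosure_le _ _ continuous_snd).trans_eq ?_
    rw [StarAlgHom.map_adjoin]
    rfl
  · rintro _ ⟨p, hp, rfl⟩
    exact ⟨p, StarSubalgebra.le_topologicalClosure _ (StarAlgebra.subset_adjoin ℂ _ hp), rfl⟩

theorem exists_starAlgHom_of_graph_closure_adjoin {ι : Type*} {a : ι → A} {b : ι → B}
    {Γ : StarSubalgebra ℂ (A × B)}
    (hΓ : Γ = (StarAlgebra.adjoin ℂ (Set.range fun i => (a i, b i))).topologicalClosure)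
    {N : NonUnitalStarSubalgebra ℂ A} (s : B →L[ℂ] A)
    (hfst : ∀ y, ((0 : A), y) ∈ Γ → y = 0) (hsub : ∀ p ∈ Γ, p.1 - s p.2 ∈ N)
    (hmem : ∀ x ∈ N, (x, (0 : B)) ∈ Γ) :
    ∃ φ : (StarAlgebra.adjoin ℂ (Set.range a)).topologicalClosure →⋆ₐ[ℂ]
        (StarAlgebra.adjoin ℂ (Set.range b)).topologicalClosure,
      Function.Surjective φ ∧ Nonempty (starAlgHomKer φ ≃⋆ₐ[ℂ] N) := by
  have map_fst : Γ.map (StarAlgHom.fst ℂ A B) =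
      (StarAlgebra.adjoin ℂ (Set.range a)).topologicalClosure := by
    subst hΓ
    rw [map_fst_topologicalClosure_adjoin hfst, ← Set.range_comp]
    rfl
  have map_snd : Γ.map (StarAlgHom.snd ℂ A B) =
      (StarAlgebra.adjoin ℂ (Set.range b)).topologicalClosure := by
    subst hΓ
    rw [map_snd_topologicalClosure_adjoin s.continuous fun p hp => hmem _ (hsub p hp),
      ← Set.range_comp]
    rfl
  obtain ⟨φ, surjective_φ, ker_φ⟩ := exists_starAlgHom_of_graph Γ hfst
  have ker_eq (x) : φ x = 0 ↔ (x : A) ∈ N := by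
    rw [ker_φ]
    exact ⟨fun h => by simpa using hsub _ h, hmem _⟩
  obtain ⟨e⟩ := nonempty_starAlgHomKer_equiv φ (fun x hx => ⟨_, hmem x hx, rfl⟩) ker_eq
  rw [← map_fst, ← map_snd]
  exact ⟨φ, surjective_φ, ⟨e⟩⟩

end Extensions

section LaurentMatrixUnits

variable {K : Type*} [DecidableEq K] {A B : Type*} [CStarAlgebra A] [CStarAlgebra B]

/-- The elements `E a k l` (`a : ℤ`, `k l : K`) satisfy the relations of `z ^ a ⊗ e_{kl}` in
`C(𝕋) ⊗ K(ℓ²(K))`, where `z` is the coordinate of the circle and `e_{kl}` are the matrix units. -/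
structure IsLaurentMatrixUnits (E : ℤ → K → K → A) : Prop where
  star_apply (a : ℤ) (k l : K) : star (E a k l) = E (-a) l k
  mul_apply (a b : ℤ) (k l k' l' : K) :
    E a k l * E b k' l' = if l = k' then E (a + b) k l' else 0

namespace IsLaurentMatrixUnits

variable {E : ℤ → K → K → A} {F : ℤ → K → K → B}

theorem prodMk (hE : IsLaurentMatrixUnits E) (hF : IsLaurentMatrixUnits F) :
    IsLaurentMatrixUnits fun a k l => (E a k l, F a k l) where
  star_apply a k l := Prod.ext (hE.star_apply a k l) (hF.star_apply a k l)
  mul_apply a b k l k' l' := by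
    rw [Prod.mk_mul_mk, hE.mul_apply, hF.mul_apply]
    split_ifs <;> rfl

theorem map (hE : IsLaurentMatrixUnits E) (p : A →⋆ₙₐ[ℂ] B) :
    IsLaurentMatrixUnits fun a k l => p (E a k l) where
  star_apply a k l := by rw [← map_star, hE.star_apply]
  mul_apply a b k l k' l' := by
    rw [← map_mul, hE.mul_apply]
    split_ifs <;> simp

/-- The closed linear span of a system of Laurent matrix units, as a non-unital C*-algebra. -/
def closedSpan (hE : IsLaurentMatrixUnits E) : NonUnitalStarSubalgebra ℂ A :=
  NonUnitalStarSubalgebra.topologicalClosure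
    { Submodule.span ℂ (Set.range fun p : ℤ × K × K => E p.1 p.2.1 p.2.2) with
      mul_mem' := by
        refine fun {x y} hx hy => Submodule.mul_le.1 ?_ x hx y hy
        rw [Submodule.span_mul_span, Submodule.span_le]
        rintro _ ⟨_, ⟨p, rfl⟩, _, ⟨p', rfl⟩, rfl⟩
        dsimp only
        rw [hE.mul_apply]
        split_ifs
        · exact Submodule.subset_span ⟨(p.1 + p'.1, p.2.1, p'.2.2), rfl⟩
        · exact zero_mem _
      star_mem' := by
        refine fun {x} hx => (Submodule.span_le (p := (Submodule.span ℂ _).comap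
          (starLinearEquiv ℂ : A ≃ₗ⋆[ℂ] A).toLinearMap)).2 ?_ hx
        rintro _ ⟨p, rfl⟩
        exact Submodule.subset_span ⟨(-p.1, p.2.2, p.2.1), (hE.star_apply _ _ _).symm⟩ }

theorem isClosed_closedSpan (hE : IsLaurentMatrixUnits E) : IsClosed (hE.closedSpan : Set A) :=
  NonUnitalStarSubalgebra.isClosed_topologicalClosure _

theorem apply_mem_closedSpan (hE : IsLaurentMatrixUnits E) (a : ℤ) (k l : K) :
    E a k l ∈ hE.closedSpan :=
  NonUnitalStarSubalgebra.le_topologicalClosure _ (Submodule.subset_span ⟨(a, k, l), rfl⟩)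

theorem closedSpan_le (hE : IsLaurentMatrixUnits E) {S : Submodule ℂ A}
    (hS : IsClosed (S : Set A)) (h : ∀ a k l, E a k l ∈ S) {x : A} (hx : x ∈ hE.closedSpan) :
    x ∈ S := by
  refine closure_minimal (Submodule.span_le.2 ?_) hS hx
  rintro _ ⟨p, rfl⟩
  exact h _ _ _

theorem nonempty_closedSpan_equiv_map (hE : IsLaurentMatrixUnits E) {p : A →⋆ₙₐ[ℂ] B}
    (hp : Set.InjOn p hE.closedSpan) :
    Nonempty (hE.closedSpan ≃⋆ₐ[ℂ] (hE.map p).closedSpan) := by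
  have maps (x) (hx : x ∈ hE.closedSpan) : p x ∈ (hE.map p).closedSpan :=
    hE.closedSpan_le (S := (hE.map p).closedSpan.toSubmodule.comap (p : A →ₗ[ℂ] B))
      ((hE.map p).isClosed_closedSpan.preimage (map_continuous p))
      (hE.map p).apply_mem_closedSpan hx
  have surjOn (y) (hy : y ∈ (hE.map p).closedSpan) : ∃ x ∈ hE.closedSpan, p x = y :=
    (hE.map p).closedSpan_le (S := hE.closedSpan.toSubmodule.map (p : A →ₗ[ℂ] B))
      (isClosed_image_of_injOn hE.isClosed_closedSpan hp)
      (fun a k l => ⟨_, hE.apply_mem_closedSpan a k l, rfl⟩) hy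
  let f : hE.closedSpan →⋆ₙₐ[ℂ] (hE.map p).closedSpan :=
    NonUnitalStarAlgHom.codRestrict (p.comp (NonUnitalStarSubalgebraClass.subtype hE.closedSpan)) _
      fun x => maps x x.2
  refine ⟨StarAlgEquiv.ofBijective f ⟨fun x y h => ?_, fun y => ?_⟩⟩
  · exact Subtype.ext (hp x.2 y.2 (congrArg Subtype.val h))
  · obtain ⟨x, hx, h⟩ := surjOn y y.2
    exact ⟨⟨x, hx⟩, Subtype.ext h⟩

theorem nonempty_closedSpan_equiv (hE : IsLaurentMatrixUnits E) (hF : IsLaurentMatrixUnits F)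
    {J : Type*} (α : J → A →L[ℂ] ℂ) (β : J → B →L[ℂ] ℂ)
    (hαβ : ∀ j a k l, α j (E a k l) = β j (F a k l))
    (hα : ∀ x, (∀ j, α j x = 0) → x = 0) (hβ : ∀ y, (∀ j, β j y = 0) → y = 0) :
    Nonempty (hE.closedSpan ≃⋆ₐ[ℂ] hF.closedSpan) := by
  have hG := hE.prodMk hF
  have agree (p) (hp : p ∈ hG.closedSpan) (j) : α j p.1 = β j p.2 := by
    let δ := (α j).comp (ContinuousLinearMap.fst ℂ A B) -
      (β j).comp (ContinuousLinearMap.snd ℂ A B)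
    exact sub_eq_zero.1 (hG.closedSpan_le (S := δ.ker) δ.isClosed_ker
      (fun a k l => sub_eq_zero.2 (hαβ j a k l)) hp)
  have injOn_fst : Set.InjOn (NonUnitalStarAlgHom.fst ℂ A B) hG.closedSpan := by
    rintro p hp p' hp' h
    refine Prod.ext h (sub_eq_zero.1 (hβ _ fun j => ?_))
    rw [map_sub, ← agree p hp, ← agree p' hp', sub_eq_zero]
    exact congrArg (α j) h
  have injOn_snd : Set.InjOn (NonUnitalStarAlgHom.snd ℂ A B) hG.closedSpan := by
    rintro p hp p' hp' h
    refine Prod.ext (sub_eq_zero.1 (hα _ fun j => ?_)) h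
    rw [map_sub, agree p hp, agree p' hp', sub_eq_zero]
    exact congrArg (β j) h
  obtain ⟨e⟩ := hG.nonempty_closedSpan_equiv_map injOn_fst
  obtain ⟨f⟩ := hG.nonempty_closedSpan_equiv_map injOn_snd
  exact ⟨e.symm.trans f⟩

end IsLaurentMatrixUnits

theorem isLaurentMatrixUnits_shiftUnit :
    IsLaurentMatrixUnits (shiftUnit : ℤ → K → K → ℓ²(ℤ × K) →L[ℂ] ℓ²(ℤ × K)) where
  star_apply a k l := adjoint_shiftUnit a k l
  mul_apply a b k l k' l' := by
    rw [ContinuousLinearMap.mul_def, shiftUnit_comp_shiftUnit]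
    simp only [eq_comm]

end LaurentMatrixUnits

/-! ### Amplification and intertwiners -/

section Amplification

variable {γ E F : Type*} [NormedAddCommGroup E] [InnerProductSpace ℂ E] [CompleteSpace E]
  [NormedAddCommGroup F] [InnerProductSpace ℂ F] [CompleteSpace F]

variable (γ E) in
/-- The diagonal action `T ↦ 1 ⊗ T` of the bounded operators on `E` on `ℓ²(γ) ⊗ E`, realized as
the space `ℓ²(γ; E)` of square-summable `E`-valued functions. -/
def diagonalAmplification : (E →L[ℂ] E) →⋆ₐ[ℂ] (lp (fun _ : γ => E) 2 →L[ℂ] lp (fun _ : γ => E) 2)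
    where
  toFun T := lp.mapCLM 2 (fun _ => T) (norm_nonneg T) fun _ => le_rfl
  map_one' := rfl
  map_mul' _ _ := rfl
  map_zero' := rfl
  map_add' _ _ := rfl
  commutes' _ := rfl
  map_star' T := by
    refine (eq_adjoint_iff _ _).2 fun x y => ?_
    rw [lp.inner_eq_tsum, lp.inner_eq_tsum]
    exact tsum_congr fun c => adjoint_inner_left T _ _

theorem diagonalAmplification_single [DecidableEq γ] (T : E →L[ℂ] E) (c : γ) (x : E) :
    diagonalAmplification γ E T (lp.single 2 c x) = lp.single 2 c (T x) := by
  ext c'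
  change T ((lp.single 2 c x : lp (fun _ : γ => E) 2) c') = _
  by_cases h : c' = c
  · subst h
    simp
  · rw [lp.single_apply_ne _ _ _ h, lp.single_apply_ne _ _ _ h, map_zero]

/-- The action `T ↦ 1 ⊗ T` of the bounded operators on `E` on a Hilbert sum of copies of `E`. -/
def amplification {V : γ → E →ₗᵢ[ℂ] F} (hV : IsHilbertSum ℂ (fun _ => E) V) :
    (E →L[ℂ] E) →⋆ₐ[ℂ] (F →L[ℂ] F) :=
  hV.linearIsometryEquiv.symm.conjStarAlgEquiv.toStarAlgHom.comp
    (diagonalAmplification γ E)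

theorem amplification_apply {V : γ → E →ₗᵢ[ℂ] F} (hV : IsHilbertSum ℂ (fun _ => E) V)
    (T : E →L[ℂ] E) (c : γ) (x : E) : amplification hV T (V c x) = V c (T x) := by
  classical
  change hV.linearIsometryEquiv.symm
    (diagonalAmplification γ E T (hV.linearIsometryEquiv (V c x))) = _
  rw [← hV.linearIsometryEquiv_symm_apply_single, LinearIsometryEquiv.apply_symm_apply,
    diagonalAmplification_single, hV.linearIsometryEquiv_symm_apply_single]

theorem isHilbertSum_reindexIsometry {ι κ : Type*} [DecidableEq κ]
    {f : γ → ι → κ} (hf : Bijective fun p : γ × ι => f p.1 p.2) (hf' : ∀ c, Injective (f c)) :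
    IsHilbertSum ℂ (fun _ => ℓ²(ι)) fun c => reindexIsometry (hf' c) := by
  classical
  refine IsHilbertSum.mk (fun c c' hc x y => ?_) fun x _ => ?_
  · have orthogonal : adjoint (reindexIsometry (hf' c')).toContinuousLinearMap ∘L
        (reindexIsometry (hf' c)).toContinuousLinearMap = 0 := by
      refine ext_stdBasis fun i => ?_
      ext j
      have : ¬ f c' j = f c i := fun h => hc (congrArg Prod.fst (hf.1 (a₁ := (c', j))
        (a₂ := (c, i)) h)).symm
      simp [adjoint_reindexIsometry_apply, reindexIsometry_stdBasis, stdBasis_apply, this]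
    have := adjoint_inner_left (reindexIsometry (hf' c')).toContinuousLinearMap y
      (reindexIsometry (hf' c) x)
    rw [← LinearIsometry.coe_toContinuousLinearMap, ← ContinuousLinearMap.comp_apply,
      orthogonal] at this
    simpa using this.symm
  · refine mem_closure_of_tendsto (hasSum_smul_stdBasis x) (Eventually.of_forall fun s => ?_)
    refine Submodule.sum_mem _ fun k _ => Submodule.smul_mem _ _ ?_
    obtain ⟨⟨c, i⟩, rfl⟩ := hf.2 k
    exact Submodule.mem_iSup_of_mem c ⟨stdBasis i, reindexIsometry_stdBasis _ _⟩

end Amplification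

section GradedAmplification

variable {K : Type*} (h : K → ℤ)

theorem bijective_gradedShift :
    Bijective fun p : ℤ × ℤ × K => (p.2.1, p.2.2, p.1 + p.2.1 - h p.2.2) := by
  refine ⟨fun ⟨c, m, k⟩ ⟨c', m', k'⟩ hp => ?_, fun ⟨m, k, l⟩ =>
    ⟨(l - m + h k, m, k), Prod.ext rfl (Prod.ext rfl (by ring))⟩⟩
  · simp only [Prod.mk.injEq] at hp
    obtain ⟨rfl, rfl, hc⟩ := hp
    simpa using hc

theorem injective_gradedShift (c : ℤ) :
    Injective fun p : ℤ × K => (p.1, p.2, c + p.1 - h p.2) := fun p p' hp => by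
  simpa using (bijective_gradedShift h).1 (a₁ := (c, p)) (a₂ := (c, p')) hp

variable [DecidableEq K]

/-- The isometric copy of `ℓ²(ℤ × K)` in `ℓ²(ℤ × K × ℤ)` spanned by the vectors `e_{m,(k,l)}` with
`l - m + h k = c`. -/
def gradedShift (c : ℤ) : ℓ²(ℤ × K) →ₗᵢ[ℂ] ℓ²(ℤ × K × ℤ) :=
  reindexIsometry (injective_gradedShift h c)

theorem isHilbertSum_gradedShift :
    IsHilbertSum ℂ (fun _ => ℓ²(ℤ × K)) (gradedShift h) :=
  isHilbertSum_reindexIsometry (bijective_gradedShift h) (injective_gradedShift h)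

/-- The representation of the bounded operators on `ℓ²(ℤ × K)` by infinitely many copies of
itself, one on each of the subspaces spanned by the `e_{m,(k,l)}` with `l - m + h k` fixed. -/
def gradedAmplification : (ℓ²(ℤ × K) →L[ℂ] ℓ²(ℤ × K)) →⋆ₐ[ℂ] (ℓ²(ℤ × K × ℤ) →L[ℂ] ℓ²(ℤ × K × ℤ)) :=
  amplification (isHilbertSum_gradedShift h)

theorem gradedAmplification_apply_stdBasis (T : ℓ²(ℤ × K) →L[ℂ] ℓ²(ℤ × K)) (m : ℤ) (k : K)
    (l : ℤ) : gradedAmplification h T (stdBasis (m, k, l)) =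
      gradedShift h (l - m + h k) (T (stdBasis (m, k))) := by
  rw [← amplification_apply (isHilbertSum_gradedShift h), gradedAmplification, gradedShift,
    reindexIsometry_stdBasis]
  congr 4
  ring

theorem IsWeightedShift.gradedAmplification {T : ℓ²(ℤ × K) →L[ℂ] ℓ²(ℤ × K)} {a : ℤ} {d : K → ℂ}
    {τ : K → K} (hT : IsWeightedShift T a d τ) :
    IsWeightedShift (gradedAmplification h T) a (fun p => d p.1)
      fun p => (τ p.1, p.2 + a + h p.1 - h (τ p.1)) := by
  rintro m ⟨k, l⟩
  rw [gradedAmplification_apply_stdBasis, hT, map_smul, gradedShift, reindexIsometry_stdBasis]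
  congr 4
  ring

end GradedAmplification

section Intertwiners

variable {H H' : Type*} [NormedAddCommGroup H] [InnerProductSpace ℂ H]
  [NormedAddCommGroup H'] [InnerProductSpace ℂ H']

/-- The pairs `(S, T)` of multipliers of a space `I` of operators from `H` to `H'` that are
intertwined by `W : H → H'` modulo `I`, that is, `W S - T W ∈ I`. -/
def intertwinersModulo (I : Submodule ℂ (H →L[ℂ] H')) (W : H →L[ℂ] H') :
    Subalgebra ℂ ((H →L[ℂ] H) × (H' →L[ℂ] H')) where
  carrier := {p | (∀ X ∈ I, X ∘L p.1 ∈ I) ∧ (∀ X ∈ I, p.2 ∘L X ∈ I) ∧ W ∘L p.1 - p.2 ∘L W ∈ I}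
  mul_mem' := by
    rintro ⟨S, T⟩ ⟨S', T'⟩ ⟨hS, hT, hW⟩ ⟨hS', hT', hW'⟩
    refine ⟨fun X hX => hS' _ (hS X hX), fun X hX => hT _ (hT' X hX), ?_⟩
    convert I.add_mem (hS' _ hW) (hT _ hW') using 1
    ext x
    simp
  add_mem' := by
    rintro ⟨S, T⟩ ⟨S', T'⟩ ⟨hS, hT, hW⟩ ⟨hS', hT', hW'⟩
    refine ⟨fun X hX => ?_, fun X hX => ?_, ?_⟩
    · simpa using I.add_mem (hS X hX) (hS' X hX)
    · simpa using I.add_mem (hT X hX) (hT' X hX)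
    · convert I.add_mem hW hW' using 1
      simp only [Prod.fst_add, Prod.snd_add, comp_add, add_comp]
      abel
  algebraMap_mem' c := by
    refine ⟨fun X hX => ?_, fun X hX => ?_, ?_⟩
    · convert I.smul_mem c hX using 1
      ext x
      simp
    · convert I.smul_mem c hX using 1
      ext x
      simp
    · convert I.zero_mem using 1
      ext x
      simp

theorem isClosed_intertwinersModulo {I : Submodule ℂ (H →L[ℂ] H')}
    (hI : IsClosed (I : Set (H →L[ℂ] H'))) (W : H →L[ℂ] H') :
    IsClosed (intertwinersModulo I W : Set ((H →L[ℂ] H) × (H' →L[ℂ] H'))) := by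
  have preimage {f : (H →L[ℂ] H) × (H' →L[ℂ] H') → H →L[ℂ] H'} (hf : Continuous f) :
      IsClosed {p | f p ∈ I} := hI.preimage hf
  refine IsClosed.and ?_ (IsClosed.and ?_ (preimage (by fun_prop)))
  · simp only [Set.ofPred_forall]
    exact isClosed_biInter fun X _ => preimage (by fun_prop)
  · simp only [Set.ofPred_forall]
    exact isClosed_biInter fun X _ => preimage (by fun_prop)

end Intertwiners

section MultiIndices

variable {N : ℕ} (s : Fin N) (k : Fin N → ℕ)

/-- The length `k_1 + ⋯ + k_N` of a multi-index. -/
def height (k : Fin N → ℕ) : ℤ := ∑ s, (k s : ℤ)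

/-- The sum of the entries of a multi-index in the (0-based) positions before `t`. -/
def heightBelow (t : ℕ) (k : Fin N → ℕ) : ℤ :=
  ∑ s ∈ Finset.univ.filter (fun s : Fin N => (s : ℕ) < t), (k s : ℤ)

/-- The multi-index `k + δ_s`. -/
def raiseAt : Fin N → ℕ := update k s (k s + 1)

/-- The multi-index `k - δ_s`, or `k` itself if `k s = 0`. -/
def lowerAt : Fin N → ℕ := update k s (k s - 1)

theorem lowerAt_raiseAt : lowerAt s (raiseAt s k) = k := by
  simp [raiseAt, lowerAt]

variable {s k} in
theorem raiseAt_lowerAt (h : k s ≠ 0) : raiseAt s (lowerAt s k) = k := by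
  have : k s - 1 + 1 = k s := by lia
  simp [raiseAt, lowerAt, this]

theorem height_raiseAt : height (raiseAt s k) = height k + 1 := by
  have split (l : Fin N → ℕ) : height l = l s + ∑ i ∈ Finset.univ.erase s, (l i : ℤ) :=
    (Finset.add_sum_erase _ _ (Finset.mem_univ s)).symm
  have off_s : ∑ i ∈ Finset.univ.erase s, (raiseAt s k i : ℤ) =
      ∑ i ∈ Finset.univ.erase s, (k i : ℤ) :=
    Finset.sum_congr rfl fun i hi => by rw [raiseAt, update_of_ne (Finset.ne_of_mem_erase hi)]
  rw [split, split, off_s, raiseAt, update_self]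
  push_cast
  ring

variable {s k} in
theorem height_lowerAt (h : k s ≠ 0) : height (lowerAt s k) = height k - 1 := by
  rw [eq_sub_iff_add_eq, ← height_raiseAt, raiseAt_lowerAt h]

theorem heightBelow_raiseAt_self : heightBelow s (raiseAt s k) = heightBelow s k :=
  Finset.sum_congr rfl fun i hi => by
    rw [raiseAt, update_of_ne (Fin.ne_of_lt (Finset.mem_filter.1 hi).2)]

theorem le_height : (k s : ℤ) ≤ height k :=
  Finset.single_le_sum (f := fun s => (k s : ℤ)) (fun _ _ => by positivity) (Finset.mem_univ s)

variable {k} in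
theorem one_le_height (h : k ≠ 0) : 1 ≤ height k := by
  obtain ⟨s, hs⟩ := ne_iff.1 h
  have := le_height s k
  simp only [Pi.zero_apply] at hs
  lia

theorem raiseAt_induction {P : (Fin N → ℕ) → Prop} (zero : P 0)
    (raise : ∀ s k, P k → P (raiseAt s k))
    (k : Fin N → ℕ) : P k := by
  generalize hM : ∑ s, k s = M
  induction M generalizing k with
  | zero => rwa [show k = 0 from funext fun s => by simpa using Finset.sum_eq_zero_iff.1 hM s]
  | succ M ih =>
    obtain ⟨s, -, hs⟩ : ∃ s ∈ Finset.univ, k s ≠ 0 := Finset.exists_ne_zero_of_sum_ne_zero (by lia)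
    have hlower : (∑ i, (lowerAt s k i : ℕ)) = M := by
      have := height_lowerAt hs
      simp only [height, ← Nat.cast_sum, hM] at this
      lia
    rw [← raiseAt_lowerAt hs]
    exact raise _ _ (ih _ hlower)

theorem tendsto_zpow_neg_height {q : ℝ} (hq : 1 < q) :
    Tendsto (fun k : Fin N → ℕ => q ^ (-height k)) cofinite (𝓝 0) := by
  have natHeight : Tendsto (fun k : Fin N → ℕ => ∑ s, k s) cofinite atTop := by
    refine tendsto_atTop.2 fun M => eventually_cofinite.2 ?_
    refine (Set.finite_Iic fun _ : Fin N => M).subset fun k hk s => ?_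
    exact (Finset.single_le_sum (fun _ _ => Nat.zero_le _) (Finset.mem_univ s)).trans
      (not_le.1 hk).le
  refine ((tendsto_pow_atTop_nhds_zero_of_lt_one (inv_nonneg.2 (zero_lt_one.trans hq).le)
    (inv_lt_one_of_one_lt₀ hq)).comp natHeight).congr fun k => ?_
  rw [comp_apply, inv_pow, ← zpow_natCast, ← zpow_neg, height, Nat.cast_sum]

end MultiIndices

/-! ### The generators of the quantum spheres -/

section Generators

variable {q : ℝ} {N : ℕ} (s : Fin N) (k : Fin N → ℕ)

variable (q) in
/-- The weight with which the generator raising the coordinate `s` maps `e_k` to `e_{k+δ_s}`. -/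
def raisingWeight : ℝ :=
  q ^ (-heightBelow s k) * √(1 - q ^ (-2 * ((k s : ℤ) + 1)))

variable (q) in
/-- The weight with which the adjoint of the generator raising the coordinate `s` maps `e_k` to
`e_{k-δ_s}`; it vanishes at `k s = 0`. -/
def loweringWeight : ℝ :=
  q ^ (-heightBelow s k) * √(1 - q ^ (-2 * (k s : ℤ)))

variable {s k} in
theorem loweringWeight_eq_zero (h : k s = 0) : loweringWeight q s k = 0 := by
  simp [loweringWeight, h]

theorem loweringWeight_raiseAt : loweringWeight q s (raiseAt s k) = raisingWeight q s k := by
  rw [loweringWeight, raisingWeight, heightBelow_raiseAt_self, raiseAt, update_self]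
  push_cast
  rfl

theorem raisingWeight_ne_zero (hq : 1 < q) : raisingWeight q s k ≠ 0 := by
  have : 0 < q := zero_lt_one.trans hq
  have : q ^ (-2 * ((k s : ℤ) + 1)) < 1 := zpow_lt_one_of_neg₀ hq (by lia)
  exact mul_ne_zero (by positivity) (Real.sqrt_ne_zero'.2 (sub_pos.2 this))

theorem shiftIdx_shiftIdx : shiftIdx (shiftIdx s) = s := by
  ext
  simp only [shiftIdx]
  lia

namespace IsVFamily

variable {v : Fin (N + 1) → (HZ N →L[ℂ] HZ N)}

theorem isWeightedShift_zero (hv : IsVFamily q v) :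
    IsWeightedShift (v 0) 1 (fun k => ((q ^ (-height k) : ℝ) : ℂ)) id :=
  hv.1

theorem isWeightedShift_succ (hv : IsVFamily q v) (j : Fin N) :
    IsWeightedShift (v j.succ) 1 (fun k => (raisingWeight q (shiftIdx j) k : ℂ))
      (raiseAt (shiftIdx j)) :=
  hv.2 j

theorem isWeightedShift_adjoint_zero (hv : IsVFamily q v) :
    IsWeightedShift (adjoint (v 0)) (-1) (fun k => ((q ^ (-height k) : ℝ) : ℂ)) id :=
  hv.isWeightedShift_zero.adjoint fun k l => by
    by_cases h : l = k <;> simp [h, Ne.symm]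

theorem isWeightedShift_adjoint_succ (hv : IsVFamily q v) (j : Fin N) :
    IsWeightedShift (adjoint (v j.succ)) (-1) (fun k => (loweringWeight q (shiftIdx j) k : ℂ))
      (lowerAt (shiftIdx j)) := by
  refine (hv.isWeightedShift_succ j).adjoint fun k l => ?_
  generalize shiftIdx j = s
  rw [Complex.conj_ofReal]
  by_cases hl : l = raiseAt s k
  · simp [hl, lowerAt_raiseAt, loweringWeight_raiseAt]
  rw [if_neg hl]
  split_ifs with hk
  · have hls : l s = 0 := by
      by_contra h
      exact hl (by rw [hk, raiseAt_lowerAt h])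
    simp [loweringWeight_eq_zero hls]
  · rfl

theorem exists_isWeightedShift (hv : IsVFamily q v) (i : Fin (N + 1)) :
    ∃ d τ, IsWeightedShift (v i) 1 d τ := by
  refine Fin.cases ⟨_, _, hv.isWeightedShift_zero⟩ (fun j => ⟨_, _, hv.isWeightedShift_succ j⟩) i

theorem exists_isWeightedShift_adjoint (hv : IsVFamily q v) (i : Fin (N + 1)) :
    ∃ d τ, IsWeightedShift (adjoint (v i)) (-1) d τ := by
  refine Fin.cases ⟨_, _, hv.isWeightedShift_adjoint_zero⟩
    (fun j => ⟨_, _, hv.isWeightedShift_adjoint_succ j⟩) i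

theorem apply_zero_mem_circleCompacts (hq : 1 < q) (hv : IsVFamily q v) :
    v 0 ∈ circleCompacts _ _ :=
  hv.isWeightedShift_zero.mem_circleCompacts injective_id
    ((tendsto_zpow_neg_height hq).ofReal)

theorem tendsto_adjoint_comp_self_pow (hq : 1 < q) (hv : IsVFamily q v) :
    Tendsto (fun M => (adjoint (v 0) ∘L v 0) ^ M) atTop (𝓝 (shiftUnit 0 0 0)) := by
  have hq0 : 0 < q := zero_lt_one.trans hq
  have square : IsWeightedShift (adjoint (v 0) ∘L v 0) 0
      (fun k => (((q ^ (-height k)) ^ 2 : ℝ) : ℂ)) id := fun m k => by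
    rw [hv.isWeightedShift_adjoint_zero.comp hv.isWeightedShift_zero]
    simp [sq]
  have limit : IsWeightedShift (shiftUnit 0 0 0 : HZ N →L[ℂ] HZ N) 0
      (fun k => if k = 0 then 1 else 0) id := fun m k => by
    rw [isWeightedShift_shiftUnit]
    by_cases h : k = 0 <;> simp [h]
  rw [tendsto_iff_norm_sub_tendsto_zero]
  refine squeeze_zero (fun _ => norm_nonneg _) (fun M => ?_)
    (tendsto_pow_atTop_nhds_zero_of_lt_one (by positivity) (inv_lt_one_of_one_lt₀ hq))
  refine ((square.pow M).sub limit).norm_le injective_id (by positivity) fun k => ?_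
  by_cases h : k = 0
  · simpa [h, height] using pow_nonneg hq0.le M
  · have weight_le : (q ^ (-height k)) ^ 2 ≤ q⁻¹ := by
      rw [← zpow_natCast, ← zpow_mul, ← zpow_neg_one]
      exact zpow_le_zpow_right₀ hq.le (by have := one_le_height h; push_cast; lia)
    rw [if_neg h, sub_zero, ← Complex.ofReal_pow, Complex.norm_real,
      Real.norm_of_nonneg (by positivity)]
    gcongr

theorem shiftUnit_zero_zero_mem (hq : 1 < q) (hv : IsVFamily q v)
    {J : NonUnitalStarSubalgebra ℂ (HZ N →L[ℂ] HZ N)} (hJ : IsClosed (J : Set (HZ N →L[ℂ] HZ N)))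
    (hv0 : v 0 ∈ J) (a : ℤ) : shiftUnit a 0 0 ∈ J := by
  have hv0_adjoint : adjoint (v 0) ∈ J := star_mem hv0
  induction a with
  | zero =>
    refine hJ.mem_of_tendsto (hv.tendsto_adjoint_comp_self_pow hq)
      ((eventually_ge_atTop 1).mono fun M hM => ?_)
    induction M, hM using Nat.le_induction with
    | base => simpa [mul_def] using mul_mem hv0_adjoint hv0
    | succ M _ ih =>
      rw [pow_succ]
      exact mul_mem ih (mul_mem hv0_adjoint hv0)
  | succ a ih =>
    have := mul_mem hv0 ih
    simpa [mul_def, hv.isWeightedShift_zero.comp_shiftUnit, height, add_comm] using this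
  | pred a ih =>
    have := mul_mem hv0_adjoint ih
    simpa [mul_def, hv.isWeightedShift_adjoint_zero.comp_shiftUnit, height,
      neg_add_eq_sub] using this

theorem mem_of_mem_circleCompacts (hq : 1 < q) (hv : IsVFamily q v)
    {J : NonUnitalStarSubalgebra ℂ (HZ N →L[ℂ] HZ N)} (hJ : IsClosed (J : Set (HZ N →L[ℂ] HZ N)))
    (hv0 : v 0 ∈ J) (hmul : ∀ i, ∀ x ∈ J, v i ∘L x ∈ J) {x : HZ N →L[ℂ] HZ N}
    (hx : x ∈ circleCompacts _ _) : x ∈ J := by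
  have column (k : Fin N → ℕ) : ∀ a, shiftUnit a k 0 ∈ J := by
    induction k using raiseAt_induction with
    | zero => exact hv.shiftUnit_zero_zero_mem hq hJ hv0
    | raise s k ih =>
      intro a
      have := hmul (shiftIdx s).succ _ (ih (a - 1))
      rw [(hv.isWeightedShift_succ _).comp_shiftUnit, shiftIdx_shiftIdx, add_sub_cancel] at this
      exact (J.toSubmodule.smul_mem_iff
        (Complex.ofReal_ne_zero.2 (raisingWeight_ne_zero s k hq))).1 this
  refine circleCompacts_le (S := J.toSubmodule) hJ (fun a k l => ?_) hx
  have := mul_mem (column k a) (star_mem (column l 0))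
  simpa [mul_def, star_eq_adjoint, adjoint_shiftUnit, shiftUnit_comp_shiftUnit] using this

end IsVFamily

end Generators

section LastCoordinate

variable {n : ℕ} (k : Fin (n + 1) → ℕ)

theorem shiftIdx_zero : shiftIdx (0 : Fin (n + 1)) = Fin.last n := by
  ext
  simp [shiftIdx]

theorem shiftIdx_succ (i : Fin n) : shiftIdx i.succ = (shiftIdx i).castSucc := by
  ext
  simp only [shiftIdx, Fin.val_succ, Fin.val_castSucc]
  lia

theorem height_eq_height_init_add : height k = height (Fin.init k : Fin n → ℕ) + k (Fin.last n) :=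
  Fin.sum_univ_castSucc _

theorem heightBelow_last : heightBelow n k = height (Fin.init k : Fin n → ℕ) := by
  rw [heightBelow, Finset.sum_filter, Fin.sum_univ_castSucc]
  simp [height, Fin.init]

theorem heightBelow_castSucc (s : Fin n) :
    heightBelow s k = heightBelow s (Fin.init k : Fin n → ℕ) := by
  rw [heightBelow, heightBelow, Finset.sum_filter, Finset.sum_filter, Fin.sum_univ_castSucc]
  simp [Fin.init, s.is_lt.le]

theorem raisingWeight_castSucc (q : ℝ) (s : Fin n) :
    raisingWeight q s.castSucc k = raisingWeight q s (Fin.init k : Fin n → ℕ) := by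
  rw [raisingWeight, raisingWeight, Fin.val_castSucc, heightBelow_castSucc, Fin.init]

theorem loweringWeight_castSucc (q : ℝ) (s : Fin n) :
    loweringWeight q s.castSucc k = loweringWeight q s (Fin.init k : Fin n → ℕ) := by
  rw [loweringWeight, loweringWeight, Fin.val_castSucc, heightBelow_castSucc, Fin.init]

theorem abs_sqrt_one_sub_sq_sub_one_le {x : ℝ} (hx₀ : 0 ≤ x) (hx₁ : x ≤ 1) :
    |√(1 - x ^ 2) - 1| ≤ x := by
  have hsq : 0 ≤ 1 - x ^ 2 := by nlinarith
  have hle : √(1 - x ^ 2) ≤ 1 := Real.sqrt_le_one.2 (by nlinarith)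
  rw [abs_sub_comm, abs_of_nonneg (sub_nonneg.2 hle)]
  nlinarith [Real.sq_sqrt hsq, Real.sqrt_nonneg (1 - x ^ 2)]

/- The deviation `|√(1 - q^{-2t}) - 1|` is at most `q^{-t}`, which supplies the decay in the last
coordinate that `q^{-heightBelow}` lacks. -/
theorem tendsto_last_weight_sub {q : ℝ} (hq : 1 < q) {t : (Fin (n + 1) → ℕ) → ℤ}
    (ht : ∀ k, (k (Fin.last n) : ℤ) ≤ t k) :
    Tendsto (fun k : Fin (n + 1) → ℕ =>
      ((q ^ (-heightBelow n k) * √(1 - q ^ (-2 * t k)) : ℝ) : ℂ) -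
        (q ^ (-height (Fin.init k : Fin n → ℕ)) : ℝ)) cofinite (𝓝 0) := by
  have hq0 : 0 < q := zero_lt_one.trans hq
  refine squeeze_zero_norm (fun k => ?_) (tendsto_zpow_neg_height hq)
  rw [heightBelow_last, ← Complex.ofReal_sub, Complex.norm_real, Real.norm_eq_abs, ← mul_sub_one,
    abs_mul, abs_of_pos (by positivity), height_eq_height_init_add, neg_add, zpow_add₀ hq0.ne']
  gcongr
  have square : q ^ (-2 * t k) = (q ^ (-t k)) ^ 2 := by
    rw [← zpow_natCast, ← zpow_mul, Nat.cast_ofNat, mul_comm, neg_mul_comm]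
  have ht0 : 0 ≤ t k := (Nat.cast_nonneg _).trans (ht k)
  rw [square]
  exact (abs_sqrt_one_sub_sq_sub_one_le (by positivity)
    (zpow_le_one_of_nonpos₀ hq.le (neg_nonpos.2 ht0))).trans
      (zpow_le_zpow_right₀ hq.le (neg_le_neg (ht k)))

/-- The multi-index `k ∈ ℕⁿ⁺¹` viewed in `ℕⁿ × ℤ`. -/
def splitLast : (Fin n → ℕ) × ℤ := (Fin.init k, k (Fin.last n))

theorem injective_splitLast : Injective (splitLast : (Fin (n + 1) → ℕ) → (Fin n → ℕ) × ℤ) := by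
  intro k k' h
  obtain ⟨hinit, hlast⟩ := Prod.mk.inj h
  rw [← Fin.snoc_init_self k, ← Fin.snoc_init_self k', hinit, Nat.cast_injective hlast]

theorem splitLast_raiseAt_last :
    splitLast (raiseAt (Fin.last n) k) = (Fin.init k, (k (Fin.last n) : ℤ) + 1) := by
  simp [splitLast, raiseAt]

variable {k} in
theorem splitLast_lowerAt_last (h : k (Fin.last n) ≠ 0) :
    splitLast (lowerAt (Fin.last n) k) = (Fin.init k, (k (Fin.last n) : ℤ) - 1) := by
  simp [splitLast, lowerAt, Nat.one_le_iff_ne_zero.2 h]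

theorem splitLast_raiseAt_castSucc (s : Fin n) :
    splitLast (raiseAt s.castSucc k) = (raiseAt s (Fin.init k), (k (Fin.last n) : ℤ)) := by
  simp [splitLast, raiseAt, (Fin.castSucc_lt_last s).ne', Fin.init]

theorem splitLast_lowerAt_castSucc (s : Fin n) :
    splitLast (lowerAt s.castSucc k) = (lowerAt s (Fin.init k), (k (Fin.last n) : ℤ)) := by
  simp [splitLast, lowerAt, (Fin.castSucc_lt_last s).ne', Fin.init]

variable (n) in
/-- The isometry `ℓ²(ℤ × ℕⁿ⁺¹) → ℓ²(ℤ × ℕⁿ × ℤ)` extending vectors by zero to negative last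
coordinates. -/
def extendLast : HZ (n + 1) →ₗᵢ[ℂ] ℓ²(ℤ × (Fin n → ℕ) × ℤ) :=
  reindexIsometry (injective_id.prodMap injective_splitLast)

theorem isWeightedShift_extendLast :
    IsWeightedShift (extendLast n).toContinuousLinearMap 0 (fun _ => 1) splitLast := fun m k => by
  rw [LinearIsometry.coe_toContinuousLinearMap, extendLast, reindexIsometry_stdBasis, add_zero,
    one_smul]
  rfl

end LastCoordinate

section SphereIntertwiners

variable {n : ℕ} {a b : ℤ}

/-- The representation of the bounded operators on `ℓ²(ℤ × ℕⁿ)` on `ℓ²(ℤ × ℕⁿ × ℤ)` under which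
weighted shifts of degree `a` that raise the height by `a - r` move the last coordinate by `r`. -/
abbrev heightAmplification (n : ℕ) : (HZ n →L[ℂ] HZ n) →⋆ₐ[ℂ]
    (ℓ²(ℤ × (Fin n → ℕ) × ℤ) →L[ℂ] ℓ²(ℤ × (Fin n → ℕ) × ℤ)) :=
  gradedAmplification height

section Defect

variable {S : HZ (n + 1) →L[ℂ] HZ (n + 1)} {T : HZ n →L[ℂ] HZ n}
  {d : (Fin (n + 1) → ℕ) → ℂ} {τ : (Fin (n + 1) → ℕ) → Fin (n + 1) → ℕ}
  {d' : (Fin n → ℕ) → ℂ} {τ' : (Fin n → ℕ) → Fin n → ℕ}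

theorem IsWeightedShift.extendLast_comp (hS : IsWeightedShift S a d τ) :
    IsWeightedShift ((extendLast n).toContinuousLinearMap ∘L S) a d fun k => splitLast (τ k) := by
  simpa using isWeightedShift_extendLast.comp hS

theorem IsWeightedShift.heightAmplification_comp (hT : IsWeightedShift T a d' τ') :
    IsWeightedShift (heightAmplification n T ∘L (extendLast n).toContinuousLinearMap) a
      (fun k => d' (Fin.init k)) fun k => (τ' (Fin.init k),
        (k (Fin.last n) : ℤ) + a + height (Fin.init k : Fin n → ℕ) - height (τ' (Fin.init k))) := by
  simpa [splitLast] using (hT.gradedAmplification height).comp isWeightedShift_extendLast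

end Defect

variable (n) in
/-- The pairs in `B(ℓ²(ℤ × ℕⁿ⁺¹)) × B(ℓ²(ℤ × ℕⁿ))` that agree up to `C(𝕋) ⊗ K`, once the second
operator is amplified to `ℓ²(ℤ × ℕⁿ × ℤ)` and restricted to non-negative last coordinates. -/
def sphereIntertwiners : Subalgebra ℂ ((HZ (n + 1) →L[ℂ] HZ (n + 1)) × (HZ n →L[ℂ] HZ n)) :=
  (intertwinersModulo (circleCompacts _ _) (extendLast n).toContinuousLinearMap).comap
    ((AlgHom.fst ℂ _ _).prod ((heightAmplification n).toAlgHom.comp (AlgHom.snd ℂ _ _)))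

theorem isClosed_sphereIntertwiners : IsClosed (sphereIntertwiners n :
    Set ((HZ (n + 1) →L[ℂ] HZ (n + 1)) × (HZ n →L[ℂ] HZ n))) :=
  (isClosed_intertwinersModulo isClosed_circleCompacts _).preimage
    (continuous_fst.prodMk ((map_continuous (heightAmplification n)).comp continuous_snd))

variable {S : HZ (n + 1) →L[ℂ] HZ (n + 1)} {T : HZ n →L[ℂ] HZ n}
  {d e : (Fin (n + 1) → ℕ) → ℂ} {τ σ : (Fin (n + 1) → ℕ) → Fin (n + 1) → ℕ}
  {d' : (Fin n → ℕ) → ℂ} {τ' : (Fin n → ℕ) → Fin n → ℕ}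

theorem IsWeightedShift.mk_mem_sphereIntertwiners
    (hS : IsWeightedShift (ContinuousLinearMap.adjoint S) b e σ) (hT : IsWeightedShift T a d' τ')
    (h : (extendLast n).toContinuousLinearMap ∘L S -
      heightAmplification n T ∘L (extendLast n).toContinuousLinearMap ∈ circleCompacts _ _) :
    (S, T) ∈ sphereIntertwiners n :=
  ⟨fun _ hX => hS.circleCompacts_comp_mem hX,
    fun _ hX => (hT.gradedAmplification height).comp_mem_circleCompacts hX, h⟩

theorem IsWeightedShift.mk_zero_mem_sphereIntertwiners
    (hS : IsWeightedShift (ContinuousLinearMap.adjoint S) b e σ) (h : S ∈ circleCompacts _ _) :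
    (S, 0) ∈ sphereIntertwiners n := by
  refine hS.mk_mem_sphereIntertwiners (a := 0) (d' := fun _ => 0) (τ' := id)
    (fun m k => by simp) ?_
  simpa using isWeightedShift_extendLast.comp_mem_circleCompacts h

theorem IsWeightedShift.mk_mem_sphereIntertwiners_of_last
    (hS' : IsWeightedShift (ContinuousLinearMap.adjoint S) b e σ) (hS : IsWeightedShift S a d τ)
    (hT : IsWeightedShift T a d' id)
    (hτ : ∀ k, d k ≠ 0 → splitLast (τ k) = (Fin.init k, (k (Fin.last n) : ℤ) + a))
    (hd : Tendsto (fun k => d k - d' (Fin.init k)) cofinite (𝓝 0)) :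
    (S, T) ∈ sphereIntertwiners n := by
  refine hS'.mk_mem_sphereIntertwiners hT ((((hS.extendLast_comp).congr_map hτ).sub ?_)
    |>.mem_circleCompacts ?_ hd)
  · simpa using hT.heightAmplification_comp
  · intro k k' h
    refine injective_splitLast ?_
    simpa [splitLast] using h

theorem IsWeightedShift.mk_mem_sphereIntertwiners_of_init
    (hS' : IsWeightedShift (ContinuousLinearMap.adjoint S) b e σ) (hS : IsWeightedShift S a d τ)
    (hT : IsWeightedShift T a d' τ') (hd : ∀ k, d k = d' (Fin.init k))
    (hτ : ∀ k, splitLast (τ k) = (τ' (Fin.init k), (k (Fin.last n) : ℤ)))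
    (hτ' : ∀ l, d' l ≠ 0 → height (τ' l) = height l + a) : (S, T) ∈ sphereIntertwiners n := by
  refine hS'.mk_mem_sphereIntertwiners hT ?_
  rw [hS.extendLast_comp.ext hT.heightAmplification_comp hd fun k hk => ?_, sub_self]
  · exact zero_mem _
  · rw [hτ, hτ' _ (hd k ▸ hk)]
    ring_nf

/-- The C*-algebra generated by the pairs `(v_0, 0)` and `(v_{i+1}, v'_i)`, which turns out to be
the graph of the homomorphism from the larger sphere algebra to the smaller one. -/
def pairedSphereAlg (v : Fin (n + 2) → (HZ (n + 1) →L[ℂ] HZ (n + 1)))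
    (v' : Fin (n + 1) → (HZ n →L[ℂ] HZ n)) :
    StarSubalgebra ℂ ((HZ (n + 1) →L[ℂ] HZ (n + 1)) × (HZ n →L[ℂ] HZ n)) :=
  (StarAlgebra.adjoin ℂ (Set.range fun i => (v i,
    (Fin.cons 0 v' : Fin (n + 2) → HZ n →L[ℂ] HZ n) i))).topologicalClosure

namespace IsVFamily

variable {q : ℝ} {v : Fin (n + 2) → (HZ (n + 1) →L[ℂ] HZ (n + 1))}
  {v' : Fin (n + 1) → (HZ n →L[ℂ] HZ n)}

theorem mk_mem_sphereIntertwiners (hq : 1 < q) (hv : IsVFamily q v) (hv' : IsVFamily q v')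
    (i : Fin (n + 2)) :
    (v i, (Fin.cons 0 v' : Fin (n + 2) → HZ n →L[ℂ] HZ n) i) ∈ sphereIntertwiners n := by
  obtain ⟨_, _, hadj⟩ := hv.exists_isWeightedShift_adjoint i
  have hi := hv.isWeightedShift_succ
  cases i using Fin.cases with
  | zero => exact hadj.mk_zero_mem_sphereIntertwiners (hv.apply_zero_mem_circleCompacts hq)
  | succ j =>
    cases j using Fin.cases with
    | zero =>
      refine hadj.mk_mem_sphereIntertwiners_of_last (hi 0) hv'.isWeightedShift_zero
        (fun k _ => ?_) ?_ <;> rw [shiftIdx_zero]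
      · exact splitLast_raiseAt_last k
      · exact tendsto_last_weight_sub hq fun k => by lia
    | succ j =>
      refine hadj.mk_mem_sphereIntertwiners_of_init (hi j.succ) (hv'.isWeightedShift_succ j)
        (fun k => ?_) (fun k => ?_) fun l _ => height_raiseAt _ l <;> rw [shiftIdx_succ]
      · rw [raisingWeight_castSucc]
      · exact splitLast_raiseAt_castSucc k _

theorem mk_adjoint_mem_sphereIntertwiners (hq : 1 < q) (hv : IsVFamily q v) (hv' : IsVFamily q v')
    (i : Fin (n + 2)) : (adjoint (v i), adjoint ((Fin.cons 0 v' : Fin (n + 2) → HZ n →L[ℂ] HZ n) i))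
      ∈ sphereIntertwiners n := by
  obtain ⟨_, _, hadj⟩ := hv.exists_isWeightedShift i
  rw [← adjoint_adjoint (v i)] at hadj
  have hi := hv.isWeightedShift_adjoint_succ
  cases i using Fin.cases with
  | zero =>
    rw [Fin.cons_zero, map_zero]
    exact hadj.mk_zero_mem_sphereIntertwiners
      (adjoint_mem_circleCompacts (hv.apply_zero_mem_circleCompacts hq))
  | succ j =>
    cases j using Fin.cases with
    | zero =>
      refine hadj.mk_mem_sphereIntertwiners_of_last (hi 0) hv'.isWeightedShift_adjoint_zero
        (fun k hk => ?_) ?_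
      · rw [shiftIdx_zero] at hk ⊢
        refine splitLast_lowerAt_last fun h => hk ?_
        rw [loweringWeight_eq_zero h, Complex.ofReal_zero]
      · rw [shiftIdx_zero]
        exact tendsto_last_weight_sub hq fun k => le_rfl
    | succ j =>
      refine hadj.mk_mem_sphereIntertwiners_of_init (hi j.succ) (hv'.isWeightedShift_adjoint_succ j)
        (fun k => ?_) (fun k => ?_) fun l hl => ?_
      · rw [shiftIdx_succ, loweringWeight_castSucc]
      · rw [shiftIdx_succ]
        exact splitLast_lowerAt_castSucc k _
      · refine height_lowerAt fun h => hl ?_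
        rw [loweringWeight_eq_zero h, Complex.ofReal_zero]

theorem mem_sphereIntertwiners (hq : 1 < q) (hv : IsVFamily q v)
    (hv' : IsVFamily q v') {p : (HZ (n + 1) →L[ℂ] HZ (n + 1)) × (HZ n →L[ℂ] HZ n)}
    (hp : p ∈ pairedSphereAlg v v') : p ∈ sphereIntertwiners n := by
  refine closure_minimal ?_ isClosed_sphereIntertwiners hp
  change (StarAlgebra.adjoin ℂ _).toSubalgebra ≤ _
  rw [StarAlgebra.adjoin_toSubalgebra, Algebra.adjoin_le_iff]
  rintro p (⟨i, rfl⟩ | ⟨i, hi⟩)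
  · exact hv.mk_mem_sphereIntertwiners hq hv' i
  · exact star_star p ▸ hi ▸ hv.mk_adjoint_mem_sphereIntertwiners hq hv' i

end IsVFamily

end SphereIntertwiners

section SphereExtension

variable {n : ℕ}

theorem norm_heightAmplification_apply_extendLast (y : HZ n →L[ℂ] HZ n) (m : ℤ)
    (k : Fin (n + 1) → ℕ) :
    ‖heightAmplification n y (extendLast n (stdBasis (m, k)))‖ =
      ‖y (stdBasis (m, (Fin.init k : Fin n → ℕ)))‖ := by
  rw [extendLast, reindexIsometry_stdBasis]
  exact (congrArg norm (gradedAmplification_apply_stdBasis _ _ _ _ _)).trans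
    (LinearIsometry.norm_map _ _)

theorem eq_zero_of_mk_zero_mem_sphereIntertwiners {y : HZ n →L[ℂ] HZ n}
    (hy : (0, y) ∈ sphereIntertwiners n) : y = 0 := by
  have hmem : heightAmplification n y ∘L (extendLast n).toContinuousLinearMap ∈
      circleCompacts _ _ := by
    have := neg_mem hy.2.2
    simpa using this
  refine ext_stdBasis fun ⟨m, k⟩ => ?_
  have snoc_injective : Injective fun c : ℕ => (Fin.snoc k c : Fin (n + 1) → ℕ) := fun c c' h => by
    simpa using congrFun h (Fin.last n)
  have limit := ((tendsto_apply_stdBasis_of_mem_circleCompacts hmem m).comp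
    snoc_injective.tendsto_cofinite).norm
  have constant (c : ℕ) : ‖(heightAmplification n y ∘L (extendLast n).toContinuousLinearMap)
      (stdBasis (m, (Fin.snoc k c : Fin (n + 1) → ℕ)))‖ = ‖y (stdBasis (m, k))‖ := by
    simpa using norm_heightAmplification_apply_extendLast y m (Fin.snoc k c)
  simpa using tendsto_nhds_unique (tendsto_const_nhds.congr fun c => (constant c).symm) limit

theorem isWeightedShift_adjoint_extendLast :
    IsWeightedShift (adjoint (extendLast n).toContinuousLinearMap) 0
      (fun p => if 0 ≤ p.2 then 1 else 0)
      fun p => (Fin.snoc p.1 p.2.toNat : Fin (n + 1) → ℕ) := by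
  refine isWeightedShift_extendLast.adjoint fun k p => ?_
  have snoc_eq (hp : 0 ≤ p.2) :
      p = splitLast k ↔ k = (Fin.snoc p.1 p.2.toNat : Fin (n + 1) → ℕ) := by
    rw [← injective_splitLast.eq_iff, eq_comm]
    simp [splitLast, hp]
  by_cases hp : 0 ≤ p.2
  · simp [snoc_eq hp, hp]
  · have : p ≠ splitLast k := fun h => hp (h ▸ Int.natCast_nonneg _)
    simp [this, hp]

variable (n) in
/-- The compression `y ↦ W* (1 ⊗ y) W` of the amplification of `y` by the isometry
`W : ℓ²(ℤ × ℕⁿ⁺¹) → ℓ²(ℤ × ℕⁿ × ℤ)`. -/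
def sphereSection : (HZ n →L[ℂ] HZ n) →L[ℂ] HZ (n + 1) →L[ℂ] HZ (n + 1) :=
  (compL ℂ _ _ _ (adjoint (extendLast n).toContinuousLinearMap)) ∘L
    (compL ℂ _ _ _).flip (extendLast n).toContinuousLinearMap ∘L
      ⟨(heightAmplification n).toAlgHom.toLinearMap, map_continuous (heightAmplification n)⟩

theorem sub_sphereSection_mem {p : (HZ (n + 1) →L[ℂ] HZ (n + 1)) × (HZ n →L[ℂ] HZ n)}
    (hp : p ∈ sphereIntertwiners n) : p.1 - sphereSection n p.2 ∈ circleCompacts _ _ := by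
  have hsub := isWeightedShift_adjoint_extendLast.comp_mem_circleCompacts hp.2.2
  rw [comp_sub, ← ContinuousLinearMap.comp_assoc, (extendLast n).adjoint_comp_self] at hsub
  exact hsub

namespace IsVFamily

variable {q : ℝ} {v : Fin (n + 2) → (HZ (n + 1) →L[ℂ] HZ (n + 1))}
  {v' : Fin (n + 1) → (HZ n →L[ℂ] HZ n)}

theorem mk_zero_mem_pairedSphereAlg (hq : 1 < q) (hv : IsVFamily q v)
    {x : HZ (n + 1) →L[ℂ] HZ (n + 1)} (hx : x ∈ circleCompacts _ _) :
    (x, 0) ∈ pairedSphereAlg v v' := by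
  have mem (i) : (v i, (Fin.cons 0 v' : Fin (n + 2) → HZ n →L[ℂ] HZ n) i) ∈
      pairedSphereAlg v v' :=
    StarSubalgebra.le_topologicalClosure _ (StarAlgebra.subset_adjoin ℂ _ ⟨i, rfl⟩)
  refine hv.mem_of_mem_circleCompacts hq
    (J := (pairedSphereAlg v v').toNonUnitalStarSubalgebra.comap (NonUnitalStarAlgHom.inl ℂ _ _))
    ?_ (mem 0) (fun i y hy => ?_) hx
  · exact (StarSubalgebra.isClosed_topologicalClosure _).preimage
      (continuous_id.prodMk continuous_const)
  · have := mul_mem (mem i) (show (y, 0) ∈ pairedSphereAlg v v' from hy)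
    rwa [Prod.mk_mul_mk, mul_zero] at this

end IsVFamily

theorem sphereAlg_eq_adjoin_range_cons (v' : Fin (n + 1) → (HZ n →L[ℂ] HZ n)) : sphereAlg v' =
    (StarAlgebra.adjoin ℂ
      (Set.range (Fin.cons 0 v' : Fin (n + 2) → HZ n →L[ℂ] HZ n))).topologicalClosure := by
  have adjoin_insert (s : Set (HZ n →L[ℂ] HZ n)) :
      StarAlgebra.adjoin ℂ (insert 0 s) = StarAlgebra.adjoin ℂ s :=
    le_antisymm (StarAlgebra.adjoin_le (Set.insert_subset (zero_mem _)
      (StarAlgebra.subset_adjoin ℂ s))) (StarAlgebra.adjoin_mono (Set.subset_insert 0 s))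
  rw [Fin.range_cons, adjoin_insert, sphereAlg]

end SphereExtension

/-! ### Continuous functions from the circle to the compact operators -/

section CircleFourier

open MeasureTheory AddCircle

/-- The function `z ↦ z ^ a` on the circle. -/
def circleMonomial (a : ℤ) : C(Circle, ℂ) :=
  ⟨fun z => ((z ^ a : Circle) : ℂ), continuous_subtype_val.comp (continuous_zpow a)⟩

/-- The identification of functions on `𝕋` with functions on `ℝ/ℤ`. -/
def circlePullback : C(Circle, ℂ) ≃⋆ₐ[ℂ] C(UnitAddCircle, ℂ) :=
  (homeomorphCircle (one_ne_zero : (1 : ℝ) ≠ 0)).compStarAlgEquiv' ℂ ℂ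

theorem circlePullback_circleMonomial (a : ℤ) : circlePullback (circleMonomial a) = fourier a := by
  ext x
  change ((homeomorphCircle one_ne_zero x ^ a : Circle) : ℂ) = _
  rw [homeomorphCircle_apply, fourier_apply, toCircle_zsmul]

/-- The `a`-th Fourier coefficient, as a continuous linear functional on `C(𝕋)`. -/
def circleFourierCoeff (a : ℤ) : C(Circle, ℂ) →L[ℂ] ℂ :=
  innerSL ℂ (fourierLp 2 a : Lp ℂ 2 (haarAddCircle (T := 1))) ∘L
    ContinuousMap.toLp 2 haarAddCircle ℂ ∘L
      ⟨circlePullback.toAlgEquiv.toLinearMap, map_continuous circlePullback⟩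

theorem circleFourierCoeff_circleMonomial (a b : ℤ) :
    circleFourierCoeff a (circleMonomial b) = if a = b then 1 else 0 := by
  rw [← orthonormal_iff_ite.1 (orthonormal_fourier (T := 1)) a b]
  change inner ℂ _ (ContinuousMap.toLp 2 haarAddCircle ℂ (circlePullback (circleMonomial b))) = _
  rw [circlePullback_circleMonomial]

theorem eq_zero_of_circleFourierCoeff {g : C(Circle, ℂ)} (h : ∀ a, circleFourierCoeff a g = 0) :
    g = 0 := by
  have toLp_eq_zero : ContinuousMap.toLp 2 (haarAddCircle (T := 1)) ℂ (circlePullback g) = 0 := by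
    refine (fourierBasis (T := 1)).repr.injective ?_
    ext a
    rw [HilbertBasis.repr_apply_apply, coe_fourierBasis, map_zero]
    exact h a
  refine circlePullback.injective (ContinuousMap.toLp_injective (p := 2) (𝕜 := ℂ)
    (haarAddCircle (T := 1)) ?_)
  exact toLp_eq_zero.trans (by simp)

theorem mem_of_circleMonomial_mem {S : Submodule ℂ C(Circle, ℂ)}
    (hS : IsClosed (S : Set C(Circle, ℂ))) (h : ∀ a, circleMonomial a ∈ S) (g : C(Circle, ℂ)) :
    g ∈ S := by
  have le : (Submodule.span ℂ (Set.range (fourier (T := 1)))).topologicalClosure ≤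
      S.comap circlePullback.symm.toAlgEquiv.toLinearMap := by
    refine Submodule.topologicalClosure_minimal _ (Submodule.span_le.2 ?_)
      (hS.preimage (map_continuous circlePullback.symm))
    rintro _ ⟨a, rfl⟩
    change circlePullback.symm (fourier a) ∈ S
    rw [← circlePullback_circleMonomial, StarAlgEquiv.symm_apply_apply]
    exact h a
  rw [span_fourier_closure_eq_top] at le
  have := le (Submodule.mem_top (x := circlePullback g))
  exact circlePullback.symm_apply_apply g ▸ this

end CircleFourier

section CompactOperators

theorem tendstoUniformlyOn_of_isCompact_of_equicontinuousOn {ι X Y : Type*} [TopologicalSpace X]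
    [UniformSpace Y] {C : Set X} (hC : IsCompact C) {Φ : ι → X → Y} (hΦ : EquicontinuousOn Φ C)
    {l : Filter ι} {g : X → Y} (h : ∀ x ∈ C, Tendsto (fun i => Φ i x) l (𝓝 (g x))) :
    TendstoUniformlyOn Φ g l C := by
  refine UniformOnFun.tendsto_iff_tendstoUniformlyOn.1
    ((EquicontinuousOn.tendsto_uniformOnFun_iff_pi' (𝔖 := {C}) (F := Φ) (f := g)
      (by simpa using hC) (by simpa using hΦ) l).2 (tendsto_pi_nhds.2 ?_)) C rfl
  rintro ⟨x, hx⟩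
  exact h x (by simpa using hx)

theorem tendsto_comp_of_isCompactOperator {ι E : Type*} [NormedAddCommGroup E] [NormedSpace ℂ E]
    {l : Filter ι} {P : ι → E →L[ℂ] E} (norm_le : ∀ i, ‖P i‖ ≤ 1)
    (tendsto : ∀ x, Tendsto (fun i => P i x) l (𝓝 x)) {T : E →L[ℂ] E} (hT : IsCompactOperator T) :
    Tendsto (fun i => P i * T) l (𝓝 T) := by
  have equicontinuous : Equicontinuous fun i => ⇑(P i) := by
    refine (LipschitzWith.uniformEquicontinuous _ 1 fun i => ?_).equicontinuous
    exact (P i).lipschitz.weaken (norm_le i)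
  have uniform := tendstoUniformlyOn_of_isCompact_of_equicontinuousOn
    (hT.isCompact_closure_image_closedBall 1)
    (equicontinuous.equicontinuousOn _) fun x _ => tendsto x
  refine Metric.tendsto_nhds.2 fun ε hε => ?_
  filter_upwards [Metric.tendstoUniformlyOn_iff.1 uniform _ (half_pos hε)] with i hi
  rw [dist_eq_norm]
  refine (opNorm_le_of_unit_norm (half_pos hε).le fun x hx => ?_).trans_lt (half_lt_self hε)
  have := hi (T x) (subset_closure ⟨x, by simp [hx], rfl⟩)
  rw [dist_comm, dist_eq_norm] at this
  exact this.le

theorem tendsto_compression_of_mem_compactOps {ι E : Type*} [NormedAddCommGroup E]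
    [InnerProductSpace ℂ E] [CompleteSpace E] {l : Filter ι} {P : ι → E →L[ℂ] E}
    (hP : ∀ i, IsStarProjection (P i)) (tendsto : ∀ x, Tendsto (fun i => P i x) l (𝓝 x))
    {T : E →L[ℂ] E} (hT : T ∈ compactOps E) : Tendsto (fun i => P i * T * P i) l (𝓝 T) := by
  have norm_le (i) : ‖P i‖ ≤ 1 := (hP i).norm_le
  have left := tendsto_comp_of_isCompactOperator norm_le tendsto hT.1
  have right : Tendsto (fun i => T * P i) l (𝓝 T) := by
    simpa [(hP _).isSelfAdjoint.star_eq] using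
      (tendsto_comp_of_isCompactOperator norm_le tendsto hT.2).star
  refine (tendsto_iff_norm_sub_tendsto_zero.2 ?_ : Tendsto _ l (𝓝 T))
  have bound : Tendsto (fun i => ‖P i * T - T‖ + ‖T * P i - T‖) l (𝓝 0) := by
    simpa using (left.sub_const T).norm.add (right.sub_const T).norm
  refine squeeze_zero (fun _ => norm_nonneg _) (fun i => ?_) bound
  calc ‖P i * T * P i - T‖ = ‖(P i * T - T) + P i * (T * P i - T)‖ := by noncomm_ring
    _ ≤ ‖P i * T - T‖ + ‖P i‖ * ‖T * P i - T‖ :=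
      (norm_add_le _ _).trans (add_le_add_right (norm_mul_le _ _) _)
    _ ≤ ‖P i * T - T‖ + ‖T * P i - T‖ := by
      gcongr
      exact mul_le_of_le_one_left (norm_nonneg _) (norm_le i)

theorem tendsto_compression_of_mem_compactValued {ι E : Type*} [NormedAddCommGroup E]
    [InnerProductSpace ℂ E] [CompleteSpace E] {l : Filter ι} {P : ι → E →L[ℂ] E}
    (hP : ∀ i, IsStarProjection (P i)) (tendsto : ∀ x, Tendsto (fun i => P i x) l (𝓝 x))
    {f : C(Circle, E →L[ℂ] E)} (hf : f ∈ compactValued E) :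
    Tendsto (fun i => ContinuousMap.const Circle (P i) * f * ContinuousMap.const Circle (P i)) l
      (𝓝 f) := by
  have equicontinuous : Equicontinuous fun i (T : E →L[ℂ] E) => P i * T * P i := by
    refine (LipschitzWith.uniformEquicontinuous _ 1 fun i => ?_).equicontinuous
    refine LipschitzWith.of_dist_le_mul fun S T => ?_
    have norm_le : ‖P i‖ ≤ 1 := (hP i).norm_le
    rw [dist_eq_norm, dist_eq_norm, ← sub_mul, ← mul_sub, NNReal.coe_one, one_mul]
    calc ‖P i * (S - T) * P i‖ ≤ ‖P i‖ * ‖S - T‖ * ‖P i‖ := norm_mul₃_le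
      _ ≤ 1 * ‖S - T‖ * 1 := by gcongr
      _ = ‖S - T‖ := by ring
  have uniform : TendstoUniformlyOn (fun i T => P i * T * P i) id l (Set.range f) := by
    refine tendstoUniformlyOn_of_isCompact_of_equicontinuousOn (isCompact_range f.continuous)
      (equicontinuous.equicontinuousOn _) ?_
    rintro _ ⟨z, rfl⟩
    exact tendsto_compression_of_mem_compactOps hP tendsto (hf z)
  refine ContinuousMap.tendsto_iff_tendstoUniformly.2 (Metric.tendstoUniformly_iff.2 fun ε hε => ?_)
  filter_upwards [Metric.tendstoUniformlyOn_iff.1 uniform ε hε] with i hi z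
  exact hi (f z) ⟨z, rfl⟩

theorem isClosed_compactOps {E : Type*} [NormedAddCommGroup E] [InnerProductSpace ℂ E]
    [CompleteSpace E] : IsClosed (compactOps E : Set (E →L[ℂ] E)) :=
  IsClosed.inter isClosed_setOfPred_isCompactOperator
    (isClosed_setOfPred_isCompactOperator.preimage continuous_star)

theorem rankOne_mem_compactOps {E : Type*} [NormedAddCommGroup E] [InnerProductSpace ℂ E]
    [CompleteSpace E] (x y : E) : InnerProductSpace.rankOne ℂ x y ∈ compactOps E := by
  have compact (x y : E) : IsCompactOperator (InnerProductSpace.rankOne ℂ x y) :=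
    (isCompactOperator_of_locallyCompactSpace_rng (toSpanSingleton ℂ x)).comp_clm (innerSL ℂ y)
  refine ⟨compact x y, ?_⟩
  rw [star_eq_adjoint, InnerProductSpace.adjoint_rankOne]
  exact compact y x

theorem isClosed_compactValued {E : Type*} [NormedAddCommGroup E] [InnerProductSpace ℂ E]
    [CompleteSpace E] : IsClosed (compactValued E : Set C(Circle, E →L[ℂ] E)) := by
  change IsClosed {f : C(Circle, E →L[ℂ] E) | ∀ z, f z ∈ compactOps E}
  rw [Set.ofPred_forall]
  exact isClosed_iInter fun z => isClosed_compactOps.preimage (continuous_eval_const z)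

end CompactOperators

section MatrixUnits

variable {K : Type*} [DecidableEq K]

/-- The matrix unit `e_{kl}` on `ℓ²(K)`. -/
def matrixUnit (k l : K) : ℓ²(K) →L[ℂ] ℓ²(K) :=
  InnerProductSpace.rankOne ℂ (stdBasis k) (stdBasis l)

theorem matrixUnit_apply (k l : K) (x : ℓ²(K)) : matrixUnit k l x = x l • stdBasis k := by
  rw [matrixUnit, InnerProductSpace.rankOne_apply, inner_stdBasis_left]

theorem matrixUnit_mem_compactOps (k l : K) : matrixUnit k l ∈ compactOps ℓ²(K) :=
  rankOne_mem_compactOps _ _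

theorem star_matrixUnit (k l : K) : star (matrixUnit k l) = matrixUnit l k := by
  rw [matrixUnit, star_eq_adjoint, InnerProductSpace.adjoint_rankOne, matrixUnit]

theorem matrixUnit_mul_matrixUnit (k l k' l' : K) :
    matrixUnit k l * matrixUnit k' l' = if l = k' then matrixUnit k l' else 0 := by
  ext1 x
  rw [mul_apply_eq_comp, matrixUnit_apply k', map_smul, matrixUnit_apply k, stdBasis_apply]
  split_ifs <;> simp [matrixUnit_apply]

/-- The functional taking an operator on `ℓ²(K)` to its `(k, l)` matrix entry. -/
def matrixEntry (k l : K) : (ℓ²(K) →L[ℂ] ℓ²(K)) →L[ℂ] ℂ :=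
  innerSL ℂ (stdBasis k) ∘L ContinuousLinearMap.apply ℂ _ (stdBasis l)

theorem matrixEntry_apply (k l : K) (T : ℓ²(K) →L[ℂ] ℓ²(K)) :
    matrixEntry k l T = T (stdBasis l) k :=
  inner_stdBasis_left _ _

theorem eq_zero_of_matrixEntry {T : ℓ²(K) →L[ℂ] ℓ²(K)} (h : ∀ k l, matrixEntry k l T = 0) :
    T = 0 := by
  refine ext_stdBasis fun l => ?_
  ext k
  rw [← matrixEntry_apply, h]
  rfl

theorem matrixEntry_matrixUnit (k l k' l' : K) :
    matrixEntry k l (matrixUnit k' l') = if k = k' ∧ l = l' then 1 else 0 := by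
  rw [matrixEntry_apply, matrixUnit_apply, lp.coeFn_smul, Pi.smul_apply, stdBasis_apply,
    stdBasis_apply]
  by_cases hk : k = k' <;> by_cases hl : l = l' <;> simp [hk, hl, Ne.symm]

theorem matrixUnit_mul_mul_matrixUnit (k l : K) (T : ℓ²(K) →L[ℂ] ℓ²(K)) :
    matrixUnit k k * T * matrixUnit l l = matrixEntry k l T • matrixUnit k l := by
  ext1 x
  rw [mul_apply_eq_comp, mul_apply_eq_comp, matrixUnit_apply l, map_smul, map_smul,
    matrixUnit_apply k, smul_apply, matrixUnit_apply, matrixEntry_apply, smul_comm]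

/-- The orthogonal projection of `ℓ²(K)` onto the span of finitely many basis vectors. -/
def basisProjection (F : Finset K) : ℓ²(K) →L[ℂ] ℓ²(K) := ∑ k ∈ F, matrixUnit k k

theorem isStarProjection_basisProjection (F : Finset K) : IsStarProjection (basisProjection F) where
  isIdempotentElem := by
    rw [IsIdempotentElem, basisProjection, Finset.sum_mul_sum]
    refine Finset.sum_congr rfl fun k hk => ?_
    simp [matrixUnit_mul_matrixUnit, hk]
  isSelfAdjoint := by
    rw [IsSelfAdjoint, basisProjection, star_sum]
    simp only [star_matrixUnit]

theorem tendsto_basisProjection_apply (x : ℓ²(K)) :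
    Tendsto (fun F => basisProjection F x) atTop (𝓝 x) := by
  simpa only [HasSum, SummationFilter.unconditional_filter, basisProjection, sum_apply,
    matrixUnit_apply] using hasSum_smul_stdBasis x

/-- The function `z ↦ z ^ a e_{kl}` on the circle. -/
def laurentUnit (a : ℤ) (k l : K) : C(Circle, ℓ²(K) →L[ℂ] ℓ²(K)) :=
  (toSpanSingleton ℂ (matrixUnit k l)).compLeftContinuous ℂ Circle (circleMonomial a)

theorem laurentUnit_apply (a : ℤ) (k l : K) (z : Circle) :
    laurentUnit a k l z = ((z ^ a : Circle) : ℂ) • matrixUnit k l :=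
  rfl

theorem isLaurentMatrixUnits_laurentUnit :
    IsLaurentMatrixUnits (laurentUnit : ℤ → K → K → C(Circle, ℓ²(K) →L[ℂ] ℓ²(K))) where
  star_apply a k l := by
    ext1 z
    rw [ContinuousMap.star_apply, laurentUnit_apply, star_smul, star_matrixUnit, laurentUnit_apply,
      zpow_neg, Circle.coe_inv_eq_conj, starRingEnd_apply]
  mul_apply a b k l k' l' := by
    ext1 z
    rw [ContinuousMap.mul_apply, laurentUnit_apply, laurentUnit_apply, smul_mul_smul_comm,
      matrixUnit_mul_matrixUnit]
    split_ifs
    · rw [laurentUnit_apply, zpow_add, Circle.coe_mul]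
    · exact smul_zero _

theorem const_basisProjection_mul_mul_mem_closedSpan (F : Finset K)
    (f : C(Circle, ℓ²(K) →L[ℂ] ℓ²(K))) :
    ContinuousMap.const Circle (basisProjection F) * f *
      ContinuousMap.const Circle (basisProjection F) ∈
        isLaurentMatrixUnits_laurentUnit.closedSpan (K := K) := by
  have expand : ContinuousMap.const Circle (basisProjection F) * f *
      ContinuousMap.const Circle (basisProjection F) = ∑ l ∈ F, ∑ k ∈ F,
        (toSpanSingleton ℂ (matrixUnit k l)).compLeftContinuous ℂ Circle
          ((matrixEntry k l).compLeftContinuous ℂ Circle f) := by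
    ext1 z
    simp only [ContinuousMap.mul_apply, ContinuousMap.const_apply, basisProjection, Finset.mul_sum,
      Finset.sum_mul, matrixUnit_mul_mul_matrixUnit, ContinuousMap.sum_apply]
    rfl
  rw [expand]
  refine sum_mem fun l _ => sum_mem fun k _ => ?_
  exact mem_of_circleMonomial_mem
    (S := isLaurentMatrixUnits_laurentUnit.closedSpan.toSubmodule.comap
      ((toSpanSingleton ℂ (matrixUnit k l)).compLeftContinuous ℂ Circle).toLinearMap)
    (isLaurentMatrixUnits_laurentUnit.isClosed_closedSpan.preimage
      (ContinuousLinearMap.continuous _))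
    (fun a => isLaurentMatrixUnits_laurentUnit.apply_mem_closedSpan a k l) _

theorem closedSpan_laurentUnit :
    isLaurentMatrixUnits_laurentUnit.closedSpan = compactValued ℓ²(K) := by
  refine le_antisymm (fun f hf => ?_) fun f hf => ?_
  · exact isLaurentMatrixUnits_laurentUnit.closedSpan_le (S := (compactValued ℓ²(K)).toSubmodule)
      isClosed_compactValued
      (fun a k l z => SMulMemClass.smul_mem _ (matrixUnit_mem_compactOps k l)) hf
  · exact isLaurentMatrixUnits_laurentUnit.isClosed_closedSpan.mem_of_tendsto
      (tendsto_compression_of_mem_compactValued isStarProjection_basisProjection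
        tendsto_basisProjection_apply hf)
      (Eventually.of_forall fun F => const_basisProjection_mul_mul_mem_closedSpan F f)

/-- The `a`-th Fourier coefficient of the `(k, l)` matrix entry of a function on the circle. -/
def entryFourierCoeff (a : ℤ) (k l : K) : C(Circle, ℓ²(K) →L[ℂ] ℓ²(K)) →L[ℂ] ℂ :=
  circleFourierCoeff a ∘L (matrixEntry k l).compLeftContinuous ℂ Circle

theorem matrixEntry_shiftUnit (m a b : ℤ) (k l k' l' : K) :
    matrixEntry (m + a, k) (m, l) (shiftUnit b k' l') =
      if a = b ∧ k = k' ∧ l = l' then 1 else 0 := by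
  rw [matrixEntry_apply, isWeightedShift_shiftUnit, lp.coeFn_smul, Pi.smul_apply, stdBasis_apply]
  by_cases hl : l = l' <;> simp [hl]

theorem entryFourierCoeff_laurentUnit (a b : ℤ) (k l k' l' : K) :
    entryFourierCoeff a k l (laurentUnit b k' l') =
      if a = b ∧ k = k' ∧ l = l' then 1 else 0 := by
  have entry_eq : (matrixEntry k l).compLeftContinuous ℂ Circle (laurentUnit b k' l') =
      (if k = k' ∧ l = l' then 1 else 0 : ℂ) • circleMonomial b := by
    ext1 z
    change matrixEntry k l (laurentUnit b k' l' z) = _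
    rw [laurentUnit_apply, map_smul, matrixEntry_matrixUnit, smul_eq_mul, mul_comm]
    rfl
  rw [entryFourierCoeff, ContinuousLinearMap.comp_apply, entry_eq, map_smul,
    circleFourierCoeff_circleMonomial]
  by_cases ha : a = b <;> simp [ha]

theorem eq_zero_of_entryFourierCoeff {f : C(Circle, ℓ²(K) →L[ℂ] ℓ²(K))}
    (h : ∀ a k l, entryFourierCoeff a k l f = 0) : f = 0 := by
  ext1 z
  refine eq_zero_of_matrixEntry fun k l => ?_
  exact DFunLike.congr_fun (eq_zero_of_circleFourierCoeff fun a => h a k l) z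

theorem nonempty_closedSpan_shiftUnit_equiv :
    Nonempty ((isLaurentMatrixUnits_shiftUnit (K := K)).closedSpan ≃⋆ₐ[ℂ] compactValued ℓ²(K)) := by
  have equiv := isLaurentMatrixUnits_shiftUnit.nonempty_closedSpan_equiv
    isLaurentMatrixUnits_laurentUnit (J := ℤ × ℤ × K × K)
    (fun ⟨m, a, k, l⟩ => matrixEntry (m + a, k) (m, l))
    (fun ⟨_, a, k, l⟩ => entryFourierCoeff a k l)
    (fun ⟨m, a, k, l⟩ b k' l' => by
      rw [matrixEntry_shiftUnit, entryFourierCoeff_laurentUnit])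
    (fun X h => eq_zero_of_matrixEntry fun ⟨m, k⟩ ⟨m', l⟩ => by
      simpa using h (m', m - m', k, l))
    (fun f h => eq_zero_of_entryFourierCoeff fun a k l => h (0, a, k, l))
  rwa [closedSpan_laurentUnit] at equiv

end MatrixUnits

/-- For every `n ≥ 1` (here `n` is replaced by `n+1`) and real `q > 1`, there is a
surjective unital *-homomorphism `φ : A_n(q) → A_{n-1}(q)` whose kernel is isomorphic,
as a non-unital C*-algebra (via a *-algebra isomorphism), to
`C(𝕋, K(H_n)) = C(𝕋) ⊗ K(ℓ²(ℕⁿ))`.  Equivalently, there is a short exact sequence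
`0 → C(𝕋) ⊗ K(ℓ²(ℤ_{≥0}ⁿ)) → C(S_q^{2n+1}) → C(S_q^{2n-1}) → 0`. -/
theorem stmt_5 (n : ℕ) (q : ℝ) (hq : 1 < q)
    (v : Fin (n + 2) → (HZ (n + 1) →L[ℂ] HZ (n + 1)))
    (v' : Fin (n + 1) → (HZ n →L[ℂ] HZ n))
    (hv : IsVFamily q v) (hv' : IsVFamily q v') :
    ∃ φ : (sphereAlg v) →⋆ₐ[ℂ] (sphereAlg v'),
      Function.Surjective φ ∧
      Nonempty ((starAlgHomKer φ) ≃⋆ₐ[ℂ] (compactValued (Hn (n + 1)))) := by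
  obtain ⟨e⟩ := nonempty_closedSpan_shiftUnit_equiv (K := Fin (n + 1) → ℕ)
  rw [sphereAlg_eq_adjoin_range_cons v']
  obtain ⟨φ, surjective_φ, ⟨f⟩⟩ := exists_starAlgHom_of_graph_closure_adjoin
    (Γ := pairedSphereAlg v v') rfl
    (N := (isLaurentMatrixUnits_shiftUnit (K := Fin (n + 1) → ℕ)).closedSpan) (sphereSection n)
    (fun y hy => eq_zero_of_mk_zero_mem_sphereIntertwiners
      (hv.mem_sphereIntertwiners hq hv' hy))
    (fun p hp => sub_sphereSection_mem (hv.mem_sphereIntertwiners hq hv' hp))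
    (fun x hx => hv.mk_zero_mem_pairedSphereAlg hq hx)
  exact ⟨φ, surjective_φ, ⟨f.trans e⟩⟩
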